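/- arXiv:1707.00038 — 2 statements merged into one kernel-verified Lean document; each statement's English description precedes it below -/
import Mathlib

section
/- (Aronson–Golubitsky–Mallet-Paret) Let N ≥ 1, β > 0, and I > 1. Then there exist T > 0 and a running function ψ of period T satisfying the delay-differential equation β ψ''(t) + ψ'(t) + sin(ψ(t)) + (1/N) Σ_{k=0}^{N−1} ψ'(t − kT/N) = I for all t ∈ ℝ; equivalently, the resistively loaded array β φ_k'' + φ_k' + sin(φ_k) + (1/N) Σ_{j=1}^N φ_j' = I admits a discrete rotating wave (pony-on-a-merry-go-round) solution φ_j(t) = ψ(t − (j−1)T/N). -/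
open Real

/-- `ψ` is a running function of period `T`: `ψ (t + T) = ψ t + 2π` for all `t`. -/
def IsRunning (ψ : ℝ → ℝ) (T : ℝ) : Prop :=
  ∀ t : ℝ, ψ (t + T) = ψ t + 2 * Real.pi

/-!
Write `ψ t = ω t + u (ω t)` with a periodic profile `u`. In this frame the delays are `N`-th parts
of the period of `u`, so averaging over them is a projection `P` commuting with translations, and
the mean of the equation determines `ω` as half the difference of `I` and the mean of
`sin (θ + u θ)`, a difference bounded away from `0`. Integrating the equation once gives
`b u' + u + P u = ∫ F` with `b = β ω` and a bounded right-hand side depending continuously on `u`.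
The left-hand side is inverted by explicit integrals `∫₀^∞ e^{-cs} f (θ - b s) ds`, bounded
uniformly in `b`. Hence `u` is a fixed point of a continuous map with bounded, uniformly Lipschitz
values, which exists by Schauder's theorem. That theorem is reduced to Brouwer's, which follows
from the Milnor-Rogers argument: for a retraction `f` of the ball onto the sphere, the volume of
the image of the ball under `(1 - t) x + t f x` would be a polynomial in `t`, constant near `0` and
equal to `0` at `t = 1`.
-/

section BrouwerSchauder

open Set Metric MeasureTheory Topology Filter

theorem exists_polynomial_eval_eq_det_one_add_smul {R M : Type*} [CommRing R] [Nontrivial R]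
    [AddCommGroup M] [Module R M] [Module.Free R M] [Module.Finite R M] (L : M →ₗ[R] M) :
    ∃ p : Polynomial R, p.natDegree ≤ Module.finrank R M ∧
      ∀ t : R, p.eval t = LinearMap.det (1 + t • L) := by
  let b := Module.finBasis R M
  let A := LinearMap.toMatrix b b L
  refine ⟨((Polynomial.X : Polynomial R) • A.map Polynomial.C +
    (1 : Matrix _ _ R).map Polynomial.C).det, ?_, fun t => ?_⟩
  · simpa using Polynomial.natDegree_det_X_add_C_le A 1
  · have toMatrix_eq : LinearMap.toMatrix b b (1 + t • L) = t • A + 1 := by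
      rw [map_add, map_smul, LinearMap.toMatrix_one, add_comm]
    rw [← LinearMap.det_toMatrix b, toMatrix_eq, ← Polynomial.coe_evalRingHom, RingHom.map_det]
    congr 1
    ext i j
    by_cases hij : i = j <;> simp [hij, mul_comm t]

theorem exists_weights_eval_eq_sum_eval {K : Type*} [Field K] {S : Set K} (hS : S.Infinite)
    (n : ℕ) (a : K) :
    ∃ (s : Finset K) (w : K → K), ↑s ⊆ S ∧
      ∀ p : Polynomial K, p.natDegree ≤ n → p.eval a = ∑ t ∈ s, w t * p.eval t := by
  classical
  obtain ⟨s, hsS, hcard⟩ := hS.exists_subset_card_eq (n + 1)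
  refine ⟨s, fun t => (Lagrange.basis s id t).eval a, hsS, fun p hp => ?_⟩
  have hdeg : p.degree < s.card := by
    rw [hcard]
    exact Polynomial.degree_le_natDegree.trans_lt (by exact_mod_cast Nat.lt_succ_of_le hp)
  conv_lhs => rw [Lagrange.eq_interpolate (s := s) (v := id) Function.injective_id.injOn hdeg]
  simp [Lagrange.interpolate_apply, Polynomial.eval_finsetSum, mul_comm]

theorem image_eq_self_of_fixes_frontier {X : Type*} [TopologicalSpace X] [T2Space X] {U : Set X}
    {F : X → X} (hU : IsOpen U) (hconn : IsPreconnected U) (hcpt : IsCompact (closure U))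
    (hF : ContinuousOn F (closure U)) (hmaps : MapsTo F U U) (hopen : IsOpen (F '' U))
    (hfix : ∀ x ∈ frontier U, F x = x) : F '' U = U := by
  refine hmaps.image_subset.antisymm ?_
  rcases U.eq_empty_or_nonempty with rfl | ⟨x₀, hx₀⟩
  · exact empty_subset _
  refine hconn.subset_of_closure_inter_subset hopen ⟨F x₀, hmaps hx₀, mem_image_of_mem F hx₀⟩ ?_
  rintro y ⟨hy, hyU⟩
  have hclosure : closure (F '' U) ⊆ F '' closure U :=
    closure_minimal (image_mono subset_closure) (hcpt.image_of_continuousOn hF).isClosed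
  obtain ⟨x, hx, rfl⟩ := hclosure hy
  by_cases hxU : x ∈ U
  · exact mem_image_of_mem F hxU
  · have hxF : F x = x := hfix x (hU.frontier_eq ▸ ⟨hx, hxU⟩)
    exact absurd (hxF ▸ hyU) hxU

section Volume

variable {E : Type*} [NormedAddCommGroup E] [NormedSpace ℝ E] {U : Set E}

theorem eventually_injOn_add_smul {g : E → E} {K : Set E} {C : NNReal}
    (hg : LipschitzOnWith C g K) : ∀ᶠ t : ℝ in 𝓝 0, InjOn (fun x => x + t • g x) K := by
  have hsmall : ∀ᶠ t : ℝ in 𝓝 0, |t| * C < 1 :=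
    ContinuousAt.eventually_lt (by fun_prop) continuousAt_const (by simp)
  filter_upwards [hsmall] with t ht x hx y hy hxy
  have hdiff : x - y = t • (g y - g x) := by
    rw [smul_sub, sub_eq_sub_iff_add_eq_add, add_comm (t • g y)]
    exact hxy
  have hcontr : ‖x - y‖ ≤ |t| * C * ‖x - y‖ :=
    calc ‖x - y‖ = |t| * ‖g y - g x‖ := by rw [hdiff, norm_smul, Real.norm_eq_abs]
      _ ≤ |t| * (C * ‖y - x‖) := by gcongr; exact hg.norm_sub_le hy hx
      _ = |t| * C * ‖x - y‖ := by rw [norm_sub_rev, mul_assoc]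
  have hnorm : ‖x - y‖ = 0 := by nlinarith [norm_nonneg (x - y)]
  exact sub_eq_zero.1 (norm_eq_zero.1 hnorm)

theorem eventually_forall_det_one_add_smul_pos {X : Type*} [TopologicalSpace X] {K : Set X}
    (hK : IsCompact K) {A : X → E →L[ℝ] E} (hA : ∀ x ∈ K, ContinuousAt A x) :
    ∀ᶠ t : ℝ in 𝓝 0, ∀ x ∈ K, 0 < (1 + t • A x).det := by
  refine hK.eventually_forall_of_forall_eventually fun x hx => ?_
  have hcont : ContinuousAt (fun z : ℝ × X => (1 + z.1 • A z.2).det) (0, x) :=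
    ContinuousLinearMap.continuous_det.continuousAt.comp <| continuousAt_const.add <|
      continuousAt_fst.smul ((hA x hx).comp continuousAt_snd)
  exact hcont.eventually_const_lt (by simp [ContinuousLinearMap.det])

variable [FiniteDimensional ℝ E]

theorem surjective_of_det_ne_zero {L : E →L[ℝ] E} (hL : L.det ≠ 0) : Function.Surjective L :=
  (LinearMap.equivOfDetNeZero (L : E →ₗ[ℝ] E) hL).surjective

variable [MeasurableSpace E] [BorelSpace E] (μ : Measure E) [μ.IsAddHaarMeasure]

theorem setIntegral_det_eq_measureReal_of_injOn {F : E → E} {F' : E → E →L[ℝ] E} (hU : IsOpen U)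
    (hconn : IsPreconnected U) (hcpt : IsCompact (closure U)) (hF : ContinuousOn F (closure U))
    (hF' : ∀ x ∈ U, HasStrictFDerivAt F (F' x) x) (hdet : ∀ x ∈ U, 0 < (F' x).det)
    (hinj : InjOn F U) (hmaps : MapsTo F U U) (hfix : ∀ x ∈ frontier U, F x = x) :
    ∫ x in U, (F' x).det ∂μ = μ.real U := by
  have hopen : IsOpen (F '' U) := by
    rw [isOpen_iff_mem_nhds]
    rintro _ ⟨x, hx, rfl⟩
    rw [← (hF' x hx).map_nhds_eq_of_surj
      (LinearMap.range_eq_top.2 (surjective_of_det_ne_zero (hdet x hx).ne'))]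
    exact image_mem_map (hU.mem_nhds hx)
  calc ∫ x in U, (F' x).det ∂μ = ∫ x in U, |(F' x).det| • (1 : ℝ) ∂μ :=
        setIntegral_congr_fun hU.measurableSet fun x hx => by simp [abs_of_pos (hdet x hx)]
    _ = ∫ _ in F '' U, (1 : ℝ) ∂μ :=
        (integral_image_eq_integral_abs_det_fderiv_smul μ hU.measurableSet
          (fun x hx => (hF' x hx).hasFDerivAt.hasFDerivWithinAt) hinj fun _ => (1 : ℝ)).symm
    _ = μ.real U := by
        rw [image_eq_self_of_fixes_frontier hU hconn hcpt hF hmaps hopen hfix]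
        simp

theorem eventually_setIntegral_det_one_add_smul_eq_measureReal {f : E → E} (hU : IsOpen U)
    (hconv : Convex ℝ U) (hbdd : Bornology.IsBounded U)
    (hf : ∀ x ∈ closure U, ContDiffAt ℝ 1 f x) (hmaps : MapsTo f U (closure U))
    (hfix : ∀ x ∈ frontier U, f x = x) :
    ∀ᶠ t : ℝ in 𝓝[>] 0, ∫ x in U, (1 + t • (fderiv ℝ f x - 1)).det ∂μ = μ.real U := by
  have hcpt : IsCompact (closure U) := hbdd.isCompact_closure
  have hderiv (x) (hx : x ∈ closure U) :
      HasStrictFDerivAt (fun y => f y - y) (fderiv ℝ f x - 1) x :=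
    ((hf x hx).hasStrictFDerivAt one_ne_zero).sub (hasStrictFDerivAt_id x)
  have hcont (x) (hx : x ∈ closure U) : ContinuousAt (fun y => fderiv ℝ f y - 1) x :=
    ((hf x hx).fderiv_right (m := 0) le_rfl).continuousAt.sub continuousAt_const
  obtain ⟨C, hC⟩ := hcpt.exists_bound_of_continuousOn fun x hx => (hcont x hx).continuousWithinAt
  have hlip : LipschitzOnWith C.toNNReal (fun y => f y - y) (closure U) :=
    hconv.closure.lipschitzOnWith_of_nnnorm_hasFDerivWithin_le
      (fun x hx => (hderiv x hx).hasFDerivAt.hasFDerivWithinAt)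
      fun x hx => NNReal.coe_le_coe.1 ((hC x hx).trans (le_coe_toNNReal C))
  have hlt : ∀ᶠ t : ℝ in 𝓝 0, t < 1 := eventually_lt_nhds one_pos
  filter_upwards [self_mem_nhdsWithin, nhdsWithin_le_nhds hlt,
    nhdsWithin_le_nhds (eventually_injOn_add_smul hlip),
    nhdsWithin_le_nhds (eventually_forall_det_one_add_smul_pos hcpt hcont)]
    with t (htpos : 0 < t) htlt hinj hdet
  have hF' (x) (hx : x ∈ closure U) :
      HasStrictFDerivAt (fun y => y + t • (f y - y)) (1 + t • (fderiv ℝ f x - 1)) x :=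
    (hasStrictFDerivAt_id x).add ((hderiv x hx).const_smul t)
  refine setIntegral_det_eq_measureReal_of_injOn μ hU hconv.isPreconnected hcpt
    (fun x hx => (hF' x hx).continuousAt.continuousWithinAt) (fun x hx => hF' x (subset_closure hx))
    (fun x hx => hdet x (subset_closure hx)) (hinj.mono subset_closure) (fun x hx => ?_)
    fun x hx => by simp [hfix x hx]
  have hcombo : (1 - t) • x + t • f x ∈ interior U :=
    hconv.combo_interior_closure_mem_interior (hU.interior_eq.symm ▸ hx) (hmaps hx)
      (sub_pos.2 htlt) htpos.le (sub_add_cancel 1 t)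
  rw [hU.interior_eq] at hcombo
  convert hcombo using 1
  module

-- The integral of `det (1 + t • (f' - 1))` is a polynomial in `t` that is constant for small
-- `t > 0`, so it has the same value at `t = 1`.
theorem setIntegral_det_fderiv_eq_measureReal {f : E → E} (hU : IsOpen U)
    (hconv : Convex ℝ U) (hbdd : Bornology.IsBounded U)
    (hf : ∀ x ∈ closure U, ContDiffAt ℝ 1 f x) (hmaps : MapsTo f U (closure U))
    (hfix : ∀ x ∈ frontier U, f x = x) :
    ∫ x in U, (fderiv ℝ f x).det ∂μ = μ.real U := by
  let S : Set ℝ := {t | ∫ x in U, (1 + t • (fderiv ℝ f x - 1)).det ∂μ = μ.real U}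
  have hS : S.Infinite := by
    obtain ⟨δ, hδ, hsub⟩ := mem_nhdsGT_iff_exists_Ioo_subset.1
      (eventually_setIntegral_det_one_add_smul_eq_measureReal μ hU hconv hbdd hf hmaps hfix)
    exact (Ioo_infinite hδ).mono hsub
  obtain ⟨s, w, hsS, hw⟩ := exists_weights_eval_eq_sum_eval hS (Module.finrank ℝ E) 1
  have hdet (L : E →L[ℝ] E) : L.det = ∑ t ∈ s, w t * (1 + t • (L - 1)).det := by
    obtain ⟨p, hdeg, hp⟩ :=
      exists_polynomial_eval_eq_det_one_add_smul ((L - 1 : E →L[ℝ] E) : E →ₗ[ℝ] E)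
    have hp' (t : ℝ) : p.eval t = (1 + t • (L - 1)).det := hp t
    simpa [hp'] using hw p hdeg
  have hsum : ∑ t ∈ s, w t = 1 := by simpa using (hw 1 (by simp)).symm
  have hint (t : ℝ) : IntegrableOn (fun x => (1 + t • (fderiv ℝ f x - 1)).det) U μ := by
    refine (ContinuousOn.integrableOn_compact hbdd.isCompact_closure fun x hx => ?_).mono_set
      subset_closure
    have hcont : ContinuousAt (fderiv ℝ f) x :=
      ((hf x hx).fderiv_right (m := 0) le_rfl).continuousAt
    exact (ContinuousLinearMap.continuous_det.continuousAt.comp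
      (continuousAt_const.add ((hcont.sub continuousAt_const).const_smul t))).continuousWithinAt
  calc ∫ x in U, (fderiv ℝ f x).det ∂μ
      = ∫ x in U, ∑ t ∈ s, w t * (1 + t • (fderiv ℝ f x - 1)).det ∂μ := by simp_rw [← hdet]
    _ = ∑ t ∈ s, w t * ∫ x in U, (1 + t • (fderiv ℝ f x - 1)).det ∂μ := by
        rw [integral_finsetSum _ fun t _ => (hint t).const_mul (w t)]
        simp_rw [integral_const_mul]
    _ = ∑ t ∈ s, w t * μ.real U := Finset.sum_congr rfl fun t ht => by rw [hsS ht]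
    _ = μ.real U := by rw [← Finset.sum_mul, hsum, one_mul]

end Volume

section UnitBall

variable {E : Type*} [NormedAddCommGroup E] [InnerProductSpace ℝ E]

theorem det_eq_zero_of_eventually_norm_eq [FiniteDimensional ℝ E] {f : E → E} {f' : E →L[ℝ] E}
    {x : E} {c : ℝ} (hf : HasFDerivAt f f' x) (hnorm : ∀ᶠ y in 𝓝 x, ‖f y‖ = c) (hx : f x ≠ 0) :
    f'.det = 0 := by
  by_contra hdet
  obtain ⟨z, hz⟩ := surjective_of_det_ne_zero hdet (f x)
  have hconst : HasFDerivAt (fun y => ‖f y‖ ^ 2) (0 : E →L[ℝ] ℝ) x :=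
    (hasFDerivAt_const (c ^ 2) x).congr_of_eventuallyEq (hnorm.mono fun y hy => by simp only [hy])
  have hinner := DFunLike.congr_fun (hf.norm_sq.unique hconst) z
  simp [hz, hx] at hinner

theorem exists_norm_ne_one_of_fixes_sphere [FiniteDimensional ℝ E] {f : E → E}
    (hf : ∀ x ∈ closedBall (0 : E) 1, ContDiffAt ℝ 1 f x)
    (hfix : ∀ x ∈ sphere (0 : E) 1, f x = x) : ∃ x ∈ ball (0 : E) 1, ‖f x‖ ≠ 1 := by
  by_contra! hnorm
  borelize E
  have hvol : ∫ x in ball (0 : E) 1, (fderiv ℝ f x).det = volume.real (ball (0 : E) 1) := by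
    refine setIntegral_det_fderiv_eq_measureReal volume isOpen_ball (convex_ball 0 1)
      isBounded_ball ?_ ?_ ?_
    · rwa [closure_ball 0 one_ne_zero]
    · rw [closure_ball 0 one_ne_zero]
      exact fun x hx => mem_closedBall_zero_iff.2 (hnorm x hx).le
    · rwa [frontier_ball 0 one_ne_zero]
  have hzero : ∫ x in ball (0 : E) 1, (fderiv ℝ f x).det = 0 :=
    setIntegral_eq_zero_of_forall_eq_zero fun x hx =>
      det_eq_zero_of_eventually_norm_eq
        ((hf x (ball_subset_closedBall hx)).differentiableAt one_ne_zero).hasFDerivAt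
        (eventually_of_mem (isOpen_ball.mem_nhds hx) hnorm)
        (norm_ne_zero_iff.1 (by simp [hnorm x hx]))
  have hpos : 0 < volume.real (ball (0 : E) 1) :=
    ENNReal.toReal_pos (measure_ball_pos _ _ one_pos).ne' measure_ball_lt_top.ne
  linarith

/-- A quarter of the discriminant of the quadratic equation `‖x + l • w‖ ^ 2 = 1` in `l`. -/
noncomputable def raySphereDiscr (x w : E) : ℝ :=
  inner ℝ x w ^ 2 + ‖w‖ ^ 2 * (1 - ‖x‖ ^ 2)

/-- The larger root `l` of `‖x + l • w‖ ^ 2 = 1`: the time at which the ray from `x` in direction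
`w` leaves the unit ball. -/
noncomputable def raySphereTime (x w : E) : ℝ :=
  (-inner ℝ x w + √(raySphereDiscr x w)) / ‖w‖ ^ 2

theorem norm_add_raySphereTime_smul {x w : E} (hx : ‖x‖ ≤ 1) (hw : w ≠ 0) :
    ‖x + raySphereTime x w • w‖ = 1 := by
  have hdiscr : 0 ≤ raySphereDiscr x w := by
    have : 0 ≤ 1 - ‖x‖ ^ 2 := by nlinarith [norm_nonneg x]
    unfold raySphereDiscr
    positivity
  have hsq : √(raySphereDiscr x w) ^ 2 = inner ℝ x w ^ 2 + ‖w‖ ^ 2 * (1 - ‖x‖ ^ 2) :=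
    Real.sq_sqrt hdiscr
  have hnormSq : ‖x + raySphereTime x w • w‖ ^ 2 = 1 := by
    rw [norm_add_sq_real, inner_smul_right, norm_smul, mul_pow, Real.norm_eq_abs, sq_abs,
      raySphereTime]
    have := norm_ne_zero_iff.2 hw
    field_simp
    linear_combination hsq
  exact (pow_eq_one_iff_of_nonneg (norm_nonneg _) two_ne_zero).1 hnormSq

theorem raySphereTime_eq_zero {x w : E} (hx : ‖x‖ = 1) (hxw : 0 ≤ inner ℝ x w) :
    raySphereTime x w = 0 := by
  simp [raySphereTime, raySphereDiscr, hx, Real.sqrt_sq hxw]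

theorem raySphereDiscr_pos {x w : E} (hx : ‖x‖ ≤ 1) (hw : w ≠ 0)
    (hxw : ‖x‖ = 1 → 0 < inner ℝ x w) : 0 < raySphereDiscr x w := by
  unfold raySphereDiscr
  rcases hx.lt_or_eq with hlt | heq
  · have : 0 < 1 - ‖x‖ ^ 2 := by nlinarith [norm_nonneg x]
    positivity
  · have := hxw heq
    rw [heq]
    nlinarith

theorem contDiffAt_raySphereTime {F : Type*} [NormedAddCommGroup F] [NormedSpace ℝ F]
    {n : WithTop ℕ∞} {v w : F → E} {y : F} (hv : ContDiffAt ℝ n v y) (hw : ContDiffAt ℝ n w y)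
    (hwy : w y ≠ 0) (hdiscr : raySphereDiscr (v y) (w y) ≠ 0) :
    ContDiffAt ℝ n (fun z => raySphereTime (v z) (w z)) y := by
  have hinner : ContDiffAt ℝ n (fun z => inner ℝ (v z) (w z)) y := hv.inner ℝ hw
  have hnormSq : ContDiffAt ℝ n (fun z => ‖w z‖ ^ 2) y := hw.norm_sq ℝ
  have hdiscr' : ContDiffAt ℝ n (fun z => raySphereDiscr (v z) (w z)) y :=
    (hinner.pow 2).add (hnormSq.mul (contDiffAt_const.sub (hv.norm_sq ℝ)))
  exact (hinner.neg.add (hdiscr'.sqrt hdiscr)).div hnormSq (by simpa using hwy)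

theorem inner_sub_pos_of_norm_le_one {x y : E} (hx : ‖x‖ = 1) (hy : ‖y‖ ≤ 1) (hxy : x ≠ y) :
    0 < inner ℝ x (x - y) := by
  have hsq : 0 < ‖x - y‖ ^ 2 := by
    have := norm_pos_iff.2 (sub_ne_zero.2 hxy)
    positivity
  rw [norm_sub_sq_real, hx] at hsq
  rw [inner_sub_right, real_inner_self_eq_norm_sq, hx]
  nlinarith [norm_nonneg y]

variable [FiniteDimensional ℝ E]

-- Without a fixed point, following the ray from `h x` through `x` up to the unit sphere would be
-- a `C¹` retraction of the ball onto the sphere.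
theorem exists_isFixedPt_of_contDiff {h : E → E} (hh : ContDiff ℝ 1 h)
    (hball : ∀ x ∈ closedBall (0 : E) 1, ‖h x‖ ≤ 1) : ∃ x, Function.IsFixedPt h x := by
  by_contra! hne
  have hdir (x : E) : x - h x ≠ 0 := sub_ne_zero.2 (Ne.symm (hne x))
  have houtward (x : E) (hx : ‖x‖ = 1) : 0 < inner ℝ x (x - h x) :=
    inner_sub_pos_of_norm_le_one hx (hball x (by simp [hx])) (Ne.symm (hne x))
  obtain ⟨x, hx, hxne⟩ := exists_norm_ne_one_of_fixes_sphere
    (f := fun x => x + raySphereTime x (x - h x) • (x - h x))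
    (fun x hx => by
      have hw : ContDiffAt ℝ 1 (fun y => y - h y) x := contDiffAt_id.sub hh.contDiffAt
      have hdiscr := raySphereDiscr_pos (mem_closedBall_zero_iff.1 hx) (hdir x) (houtward x)
      exact contDiffAt_id.add
        ((contDiffAt_raySphereTime contDiffAt_id hw (hdir x) hdiscr.ne').smul hw))
    (fun x hx => by
      have hx' : ‖x‖ = 1 := mem_sphere_zero_iff_norm.1 hx
      simp [raySphereTime_eq_zero hx' (houtward x hx').le])
  exact hxne (norm_add_raySphereTime_smul (mem_ball_zero_iff.1 hx).le (hdir x))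

theorem exists_isFixedPt_of_contDiff_of_norm_le {h : E → E} (hh : ContDiff ℝ 1 h) {R : ℝ}
    (hR : 0 < R) (hbound : ∀ x, ‖h x‖ ≤ R) : ∃ x, Function.IsFixedPt h x := by
  obtain ⟨x, hx⟩ := exists_isFixedPt_of_contDiff (h := fun x => R⁻¹ • h (R • x))
    (contDiff_const.smul (hh.comp (contDiff_const.smul contDiff_id))) fun x _ => by
      rw [norm_smul, norm_inv, Real.norm_of_nonneg hR.le, inv_mul_le_iff₀ hR, mul_one]
      exact hbound _
  exact ⟨R • x, (inv_smul_eq_iff₀ hR.ne').1 hx⟩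

end UnitBall

theorem exists_isFixedPt_of_forall_exists_dist_lt {X : Type*} [MetricSpace X] {f : X → X}
    (hf : Continuous f) {K : Set X} (hK : IsCompact K) (hfK : ∀ x, f x ∈ K)
    (happrox : ∀ ε > 0, ∃ x, dist (f x) x < ε) : ∃ x, Function.IsFixedPt f x := by
  choose x hx using fun n : ℕ => happrox (1 / (n + 1)) Nat.one_div_pos_of_nat
  obtain ⟨z, -, φ, hφ, hlim⟩ := hK.tendsto_subseq fun n => hfK (x n)
  have hdist : Tendsto (fun n => dist (f (x (φ n))) (x (φ n))) atTop (𝓝 0) :=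
    squeeze_zero (fun _ => dist_nonneg) (fun n => (hx (φ n)).le)
      (tendsto_one_div_add_atTop_nhds_zero_nat.comp hφ.tendsto_atTop)
  have hlim' : Tendsto (fun n => x (φ n)) atTop (𝓝 z) := hlim.congr_dist hdist
  exact ⟨z, tendsto_nhds_unique ((hf.tendsto z).comp hlim') hlim⟩

theorem exists_isFixedPt_of_continuous_of_norm_le {E : Type*} [NormedAddCommGroup E]
    [InnerProductSpace ℝ E] [FiniteDimensional ℝ E] {f : E → E} (hf : Continuous f) {R : ℝ}
    (hbound : ∀ x, ‖f x‖ ≤ R) : ∃ x, Function.IsFixedPt f x := by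
  refine exists_isFixedPt_of_forall_exists_dist_lt hf (isCompact_closedBall 0 R)
    (fun x => mem_closedBall_zero_iff.2 (hbound x)) fun ε hε => ?_
  obtain ⟨g, hg, hgf, -⟩ := hf.exists_contDiff_approx 1 (ε := fun _ => ε) continuous_const
    fun _ => hε
  have hR : 0 ≤ R := (norm_nonneg _).trans (hbound 0)
  have hgbound (x : E) : ‖g x‖ ≤ R + ε := by
    linarith [norm_le_norm_add_norm_sub' (g x) (f x), dist_eq_norm (g x) (f x), hgf x, hbound x]
  obtain ⟨x, hx⟩ := exists_isFixedPt_of_contDiff_of_norm_le hg (by linarith) hgbound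
  refine ⟨x, ?_⟩
  simpa only [hx.eq, dist_comm x] using hgf x

section Schauder

variable {X : Type*} [NormedAddCommGroup X] [NormedSpace ℝ X]

theorem exists_dist_lt_of_forall_mem_isCompact {f : X → X} (hf : Continuous f) {K : Set X}
    (hK : IsCompact K) (hfK : ∀ x, f x ∈ K) {ε : ℝ} (hε : 0 < ε) : ∃ x, dist (f x) x < ε := by
  obtain ⟨t, -, htfin, hcover⟩ := hK.finite_cover_balls hε
  have : Fintype t := htfin.fintype
  obtain ⟨ρ, hρ⟩ := PartitionOfUnity.exists_isSubordinate hK.isClosed (fun i : t => ball (i : X) ε)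
    (fun _ => isOpen_ball) (by simpa only [iUnion_subtype, iUnion_coe_set] using hcover)
  let combine : EuclideanSpace ℝ t → X := fun v => ∑ i, v i • (i : X)
  let weights : EuclideanSpace ℝ t → EuclideanSpace ℝ t := fun v =>
    WithLp.toLp 2 fun i => ρ i (f (combine v))
  have hcombine : Continuous combine := by fun_prop
  have hweights : Continuous weights := by fun_prop
  have hbound (v) : ‖weights v‖ ≤ √(∑ _ : t, 1) := by
    rw [EuclideanSpace.norm_eq]
    gcongr with i
    rw [Real.norm_of_nonneg (ρ.nonneg _ _)]
    exact pow_le_one₀ (ρ.nonneg _ _) (ρ.le_one _ _)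
  obtain ⟨v, hv⟩ := exists_isFixedPt_of_continuous_of_norm_le hweights hbound
  refine ⟨combine v, ?_⟩
  have hmem : ∑ᶠ i, ρ i (f (combine v)) • (i : X) ∈ ball (f (combine v)) ε :=
    ρ.finsum_smul_mem_convex (g := fun i _ => (i : X)) (hfK _)
      (fun i hi => mem_ball_comm.1 (hρ i (subset_tsupport _ hi))) (convex_ball _ _)
  have hcomb : combine v = ∑ᶠ i, ρ i (f (combine v)) • (i : X) := by
    rw [finsum_eq_sum_of_fintype]
    conv_lhs => rw [← hv.eq]
  rw [← hcomb] at hmem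
  exact mem_ball'.1 hmem

theorem exists_isFixedPt_of_forall_mem_isCompact {f : X → X} (hf : Continuous f) {K : Set X}
    (hK : IsCompact K) (hfK : ∀ x, f x ∈ K) : ∃ x, Function.IsFixedPt f x :=
  exists_isFixedPt_of_forall_exists_dist_lt hf hK hfK fun _ hε =>
    exists_dist_lt_of_forall_mem_isCompact hf hK hfK hε

end Schauder

end BrouwerSchauder

section Resolvent

open Set Filter Topology MeasureTheory

/-- The Laplace transform `∫₀^∞ e^{-cs} f (· - b s) ds` of the translation flow of speed `b`: for
`0 < c` it is the unique bounded solution `y` of `b y' + c y = f`, whatever the sign of `b`. -/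
noncomputable def translationResolvent (b c : ℝ) (f : ℝ → ℝ) (θ : ℝ) : ℝ :=
  ∫ s in Ioi 0, exp (-c * s) * f (θ - b * s)

variable {b c M M' p : ℝ} {f f' : ℝ → ℝ}

theorem integrableOn_exp_neg_mul_mul (hc : 0 < c) (hf : Continuous f) (hM : ∀ s, |f s| ≤ M) :
    IntegrableOn (fun s => exp (-c * s) * f s) (Ioi 0) :=
  (exp_neg_integrableOn_Ioi 0 hc).mul_bdd hf.aestronglyMeasurable (ae_of_all _ hM)

theorem abs_translationResolvent_le (hc : 0 < c) (hM : ∀ θ, |f θ| ≤ M) (θ : ℝ) :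
    |translationResolvent b c f θ| ≤ M / c :=
  calc |translationResolvent b c f θ| ≤ ∫ s in Ioi 0, exp (-c * s) * M := by
        rw [← norm_eq_abs]
        refine norm_integral_le_of_norm_le ((exp_neg_integrableOn_Ioi 0 hc).mul_const M)
          (ae_of_all _ fun s => ?_)
        rw [norm_mul, norm_of_nonneg (exp_nonneg _)]
        exact mul_le_mul_of_nonneg_left (hM _) (exp_nonneg _)
    _ = M / c := by
        rw [integral_mul_const, integral_exp_mul_Ioi (neg_neg_of_pos hc)]
        simp [div_eq_inv_mul]

theorem hasDerivAt_translationResolvent (hc : 0 < c) (hf : ∀ θ, HasDerivAt f (f' θ) θ)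
    (hf' : Continuous f') (hM : ∀ θ, |f θ| ≤ M) (hM' : ∀ θ, |f' θ| ≤ M') (θ : ℝ) :
    HasDerivAt (translationResolvent b c f) (translationResolvent b c f' θ) θ := by
  have hcont : Continuous f := continuous_iff_continuousAt.2 fun θ => (hf θ).continuousAt
  refine (hasDerivAt_integral_of_dominated_loc_of_deriv_le (s := univ)
    (F' := fun θ s => exp (-c * s) * f' (θ - b * s)) (bound := fun s => exp (-c * s) * M')
    univ_mem (Eventually.of_forall fun θ => ?_) ?_ ?_ (ae_of_all _ fun s θ _ => ?_)
    ((exp_neg_integrableOn_Ioi 0 hc).mul_const M') (ae_of_all _ fun s θ _ => ?_)).2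
  · exact Continuous.aestronglyMeasurable (by fun_prop)
  · exact integrableOn_exp_neg_mul_mul hc (by fun_prop) fun s => hM _
  · exact Continuous.aestronglyMeasurable (by fun_prop)
  · rw [norm_mul, norm_of_nonneg (exp_nonneg _)]
    exact mul_le_mul_of_nonneg_left (hM' _) (exp_nonneg _)
  · exact ((hf _).comp_sub_const θ (b * s)).const_mul _

theorem mul_translationResolvent_add_eq (hc : 0 < c) (hf : ∀ θ, HasDerivAt f (f' θ) θ)
    (hf' : Continuous f') (hM : ∀ θ, |f θ| ≤ M) (hM' : ∀ θ, |f' θ| ≤ M') (θ : ℝ) :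
    b * translationResolvent b c f' θ + c * translationResolvent b c f θ = f θ := by
  have hcont : Continuous f := continuous_iff_continuousAt.2 fun θ => (hf θ).continuousAt
  have hint := integrableOn_exp_neg_mul_mul (f := fun s => f (θ - b * s)) hc (by fun_prop)
    fun s => hM _
  have hint' := integrableOn_exp_neg_mul_mul (f := fun s => f' (θ - b * s)) hc (by fun_prop)
    fun s => hM' _
  have hderiv (s : ℝ) : HasDerivAt (fun s => -(exp (-c * s) * f (θ - b * s)))
      (b * (exp (-c * s) * f' (θ - b * s)) + c * (exp (-c * s) * f (θ - b * s))) s := by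
    have hexp : HasDerivAt (fun s => exp (-c * s)) (exp (-c * s) * -c) s :=
      (hasDerivAt_const_mul (-c)).exp
    have hshift : HasDerivAt (fun s => f (θ - b * s)) (f' (θ - b * s) * -b) s :=
      (hf _).comp s ((hasDerivAt_const_mul b).const_sub θ)
    exact (hexp.mul hshift).neg.congr_deriv (by ring)
  have hlim : Tendsto (fun s => -(exp (-c * s) * f (θ - b * s))) atTop (𝓝 0) := by
    have hexp : Tendsto (fun s => exp (-c * s)) atTop (𝓝 0) :=
      tendsto_exp_atBot.comp (tendsto_id.const_mul_atTop_of_neg (neg_neg_of_pos hc))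
    rw [← neg_zero]
    exact (hexp.zero_mul_isBoundedUnder_le (isBoundedUnder_of ⟨M, fun s => hM _⟩)).neg
  calc b * translationResolvent b c f' θ + c * translationResolvent b c f θ
      = ∫ s in Ioi 0, b * (exp (-c * s) * f' (θ - b * s)) + c * (exp (-c * s) * f (θ - b * s)) := by
        rw [integral_add (hint'.const_mul b) (hint.const_mul c), integral_const_mul,
          integral_const_mul, translationResolvent, translationResolvent]
    _ = f θ := by
        rw [integral_Ioi_of_hasDerivAt_of_tendsto' (fun s _ => hderiv s)
          ((hint'.const_mul b).add (hint.const_mul c)) hlim]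
        simp

theorem continuous_translationResolvent {X : Type*} [TopologicalSpace X] [FirstCountableTopology X]
    {b θ : X → ℝ} {f : X → ℝ → ℝ} (hc : 0 < c) (hb : Continuous b)
    (hf : Continuous (Function.uncurry f)) (hM : ∀ x s, |f x s| ≤ M) (hθ : Continuous θ) :
    Continuous fun x => translationResolvent (b x) c (f x) (θ x) := by
  refine continuous_of_dominated (bound := fun s => exp (-c * s) * M) (fun x => ?_)
    (fun x => ae_of_all _ fun s => ?_) ((exp_neg_integrableOn_Ioi 0 hc).mul_const M)
    (ae_of_all _ fun s => by fun_prop)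
  · exact Continuous.aestronglyMeasurable (by fun_prop)
  · rw [norm_mul, norm_of_nonneg (exp_nonneg _)]
    exact mul_le_mul_of_nonneg_left (hM _ _) (exp_nonneg _)

theorem translationResolvent_periodic (hf : Function.Periodic f p) :
    Function.Periodic (translationResolvent b c f) p := fun θ => by
  simp_rw [translationResolvent, add_sub_right_comm, hf _]

end Resolvent

section DelayMean

open Finset

/-- The mean `(1/N) ∑ f (· - k p / N)`, over `0 ≤ k < N`, of the translates of `f` by the `N`-th
parts of the period `p`. -/
noncomputable def delayMean (N : ℕ) (p : ℝ) (f : ℝ → ℝ) (θ : ℝ) : ℝ :=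
  1 / N * ∑ k ∈ range N, f (θ - k * p / N)

variable {N : ℕ} {p M : ℝ} {f g f' : ℝ → ℝ}

theorem delayMean_add : delayMean N p (f + g) = delayMean N p f + delayMean N p g := by
  ext θ
  simp [delayMean, sum_add_distrib, mul_add]

theorem delayMean_sub : delayMean N p (f - g) = delayMean N p f - delayMean N p g := by
  ext θ
  simp [delayMean, sum_sub_distrib, mul_sub]

theorem delayMean_periodic (hf : Function.Periodic f p) : Function.Periodic (delayMean N p f) p :=
  fun θ => by simp_rw [delayMean, add_sub_right_comm, hf _]

theorem delayMean_periodic_div (hN : N ≠ 0) (hf : Function.Periodic f p) :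
    Function.Periodic (delayMean N p f) (p / N) := fun θ => by
  obtain ⟨n, rfl⟩ := Nat.exists_eq_succ_of_ne_zero hN
  have hshift (k : ℕ) : θ + p / (n + 1 : ℕ) - (k + 1 : ℕ) * p / (n + 1 : ℕ) =
      θ - k * p / (n + 1 : ℕ) := by
    push_cast
    ring
  have hwrap : f (θ + p / (n + 1 : ℕ)) = f (θ - n * p / (n + 1 : ℕ)) := by
    rw [← hf (θ - n * p / (n + 1 : ℕ))]
    congr 1
    push_cast
    field_simp
    ring
  simp only [delayMean]
  rw [sum_range_succ', sum_range_succ]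
  simp only [hshift, Nat.cast_zero, zero_mul, zero_div, sub_zero, hwrap]

theorem delayMean_eq_self (hN : N ≠ 0) (hf : Function.Periodic f (p / N)) :
    delayMean N p f = f := by
  ext θ
  have hterm (k : ℕ) : f (θ - k * p / N) = f θ := by
    rw [mul_div_assoc, ← nsmul_eq_mul]
    exact hf.sub_nsmul_eq k
  simp [delayMean, hterm, hN]

theorem delayMean_delayMean (hf : Function.Periodic f p) :
    delayMean N p (delayMean N p f) = delayMean N p f := by
  rcases eq_or_ne N 0 with rfl | hN
  · ext θ
    simp [delayMean]
  · exact delayMean_eq_self hN (delayMean_periodic_div hN hf)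

theorem hasDerivAt_delayMean (hf : ∀ θ, HasDerivAt f (f' θ) θ) (θ : ℝ) :
    HasDerivAt (delayMean N p f) (delayMean N p f' θ) θ :=
  (HasDerivAt.fun_sum fun _ _ => (hf _).comp_sub_const θ _).const_mul _

theorem abs_delayMean_le (hM : ∀ θ, |f θ| ≤ M) (θ : ℝ) : |delayMean N p f θ| ≤ M := by
  have hM₀ : 0 ≤ M := (abs_nonneg _).trans (hM 0)
  rcases eq_or_ne N 0 with rfl | hN
  · simpa [delayMean] using hM₀
  calc |delayMean N p f θ| = 1 / N * |∑ k ∈ range N, f (θ - k * p / N)| := by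
        rw [delayMean, abs_mul, abs_of_nonneg (by positivity)]
    _ ≤ 1 / N * ∑ _k ∈ range N, M := by
        gcongr
        exact (abs_sum_le_sum_abs _ _).trans (sum_le_sum fun k _ => hM _)
    _ = M := by simp [hN]

theorem translationResolvent_delayMean {b c : ℝ} (hc : 0 < c) (hf : Continuous f)
    (hM : ∀ θ, |f θ| ≤ M) :
    translationResolvent b c (delayMean N p f) = delayMean N p (translationResolvent b c f) := by
  ext θ
  have hint (k : ℕ) := integrableOn_exp_neg_mul_mul (f := fun s => f (θ - b * s - k * p / N)) hc
    (by fun_prop) fun s => hM _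
  simp only [translationResolvent, delayMean, sub_right_comm _ (_ * p / N)]
  rw [← MeasureTheory.integral_finsetSum _ fun k _ => hint k, ← MeasureTheory.integral_const_mul]
  simp only [mul_sum, mul_left_comm]

end DelayMean

section DelayedSolution

open Function

/-- The bounded solution `y` of `b y' + y + delayMean N p y = f` for `p`-periodic `f`: on the range
of the projection `delayMean N p` the operator is `b y' + 2 y`, on its kernel it is `b y' + y`. -/
noncomputable def delayedSolution (N : ℕ) (p b : ℝ) (f : ℝ → ℝ) : ℝ → ℝ :=
  translationResolvent b 1 f - translationResolvent b 1 (delayMean N p f) +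
    translationResolvent b 2 (delayMean N p f)

variable {N : ℕ} {p b M M' : ℝ} {f f' : ℝ → ℝ}

theorem abs_delayedSolution_le (hM : ∀ θ, |f θ| ≤ M) (θ : ℝ) :
    |delayedSolution N p b f θ| ≤ 3 * M := by
  have hM₀ : 0 ≤ M := (abs_nonneg _).trans (hM 0)
  have h₁ := abs_le.1 (abs_translationResolvent_le (b := b) one_pos hM θ)
  have h₂ := abs_le.1 (abs_translationResolvent_le (b := b) one_pos
    (abs_delayMean_le (N := N) (p := p) hM) θ)
  have h₃ := abs_le.1 (abs_translationResolvent_le (b := b) two_pos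
    (abs_delayMean_le (N := N) (p := p) hM) θ)
  simp only [delayedSolution, Pi.add_apply, Pi.sub_apply, abs_le]
  constructor <;> linarith

theorem delayedSolution_periodic (hf : Periodic f p) : Periodic (delayedSolution N p b f) p :=
  have hmean : Periodic (delayMean N p f) p := delayMean_periodic hf
  ((translationResolvent_periodic hf).sub (translationResolvent_periodic hmean)).add
    (translationResolvent_periodic hmean)

theorem continuous_delayedSolution {X : Type*} [TopologicalSpace X] [FirstCountableTopology X]
    {b θ : X → ℝ} {f : X → ℝ → ℝ} (hb : Continuous b) (hf : Continuous (uncurry f))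
    (hM : ∀ x s, |f x s| ≤ M) (hθ : Continuous θ) :
    Continuous fun x => delayedSolution N p (b x) (f x) (θ x) := by
  have hmean : Continuous (uncurry fun x => delayMean N p (f x)) := by
    unfold delayMean uncurry
    fun_prop
  have hmeanM (x : X) : ∀ s, |delayMean N p (f x) s| ≤ M := abs_delayMean_le (hM x)
  exact ((continuous_translationResolvent one_pos hb hf hM hθ).sub
    (continuous_translationResolvent one_pos hb hmean hmeanM hθ)).add
    (continuous_translationResolvent two_pos hb hmean hmeanM hθ)

theorem hasDerivAt_delayedSolution (hf : ∀ θ, HasDerivAt f (f' θ) θ) (hf' : Continuous f')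
    (hM : ∀ θ, |f θ| ≤ M) (hM' : ∀ θ, |f' θ| ≤ M') (θ : ℝ) :
    HasDerivAt (delayedSolution N p b f) (delayedSolution N p b f' θ) θ := by
  have hmean' : Continuous (delayMean N p f') := by
    unfold delayMean
    fun_prop
  exact ((hasDerivAt_translationResolvent one_pos hf hf' hM hM' θ).sub
    (hasDerivAt_translationResolvent one_pos (hasDerivAt_delayMean hf) hmean'
      (abs_delayMean_le hM) (abs_delayMean_le hM') θ)).add
    (hasDerivAt_translationResolvent two_pos (hasDerivAt_delayMean hf) hmean'
      (abs_delayMean_le hM) (abs_delayMean_le hM') θ)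

theorem delayMean_delayedSolution (hf : Continuous f) (hM : ∀ θ, |f θ| ≤ M) (hper : Periodic f p) :
    delayMean N p (delayedSolution N p b f) = translationResolvent b 2 (delayMean N p f) := by
  have hmean : Continuous (delayMean N p f) := by
    unfold delayMean
    fun_prop
  rw [delayedSolution, delayMean_add, delayMean_sub, ← translationResolvent_delayMean one_pos hf hM,
    ← translationResolvent_delayMean one_pos hmean (abs_delayMean_le hM),
    ← translationResolvent_delayMean two_pos hmean (abs_delayMean_le hM), delayMean_delayMean hper,
    sub_self, zero_add]

theorem mul_delayedSolution_add_eq (hf : ∀ θ, HasDerivAt f (f' θ) θ) (hf' : Continuous f')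
    (hM : ∀ θ, |f θ| ≤ M) (hM' : ∀ θ, |f' θ| ≤ M') (hper : Periodic f p) (θ : ℝ) :
    b * delayedSolution N p b f' θ + delayedSolution N p b f θ +
      delayMean N p (delayedSolution N p b f) θ = f θ := by
  have hcont : Continuous f := continuous_iff_continuousAt.2 fun θ => (hf θ).continuousAt
  have hmean' : Continuous (delayMean N p f') := by
    unfold delayMean
    fun_prop
  have hmean {c : ℝ} (hc : 0 < c) := mul_translationResolvent_add_eq (b := b) hc
    (hasDerivAt_delayMean (N := N) (p := p) hf) hmean' (abs_delayMean_le hM)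
    (abs_delayMean_le hM') θ
  rw [delayMean_delayedSolution hcont hM hper]
  simp only [delayedSolution, Pi.add_apply, Pi.sub_apply]
  linear_combination mul_translationResolvent_add_eq (b := b) one_pos hf hf' hM hM' θ -
    hmean one_pos + hmean two_pos

end DelayedSolution

section PeriodicFixedPoint

open Function
open scoped BoundedContinuousFunction

theorem equicontinuous_of_isOpenQuotientMap {ι X Y α : Type*} [TopologicalSpace X]
    [TopologicalSpace Y] [UniformSpace α] {q : X → Y} {F : ι → Y → α} (hq : IsOpenQuotientMap q)
    (hF : Equicontinuous fun i => F i ∘ q) : Equicontinuous F := by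
  intro y U hU
  obtain ⟨x, rfl⟩ := hq.surjective y
  rw [← hq.map_nhds_eq]
  exact hF x U hU

variable {p : ℝ} [Fact (0 < p)]

theorem exists_forall_eq_of_periodic_of_lipschitzWith {T : (AddCircle p →ᵇ ℝ) → ℝ → ℝ}
    {C : ℝ} {K : NNReal} (hT : Continuous (uncurry T)) (hper : ∀ x, Periodic (T x) p)
    (hC : ∀ x θ, |T x θ| ≤ C) (hK : ∀ x, LipschitzWith K (T x)) :
    ∃ x : AddCircle p →ᵇ ℝ, ∀ θ : ℝ, T x θ = x θ := by
  have hquot : IsOpenQuotientMap ((↑) : ℝ → AddCircle p) := QuotientAddGroup.isOpenQuotientMap_mk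
  have hlift : Continuous (uncurry fun x => (hper x).lift) :=
    (IsOpenQuotientMap.id.prodMap hquot).isQuotientMap.continuous_iff.2 hT
  let T' : (AddCircle p →ᵇ ℝ) → (AddCircle p →ᵇ ℝ) := fun x =>
    ContinuousMap.isometryEquivBoundedOfCompact _ _ (ContinuousMap.curry ⟨_, hlift⟩ x)
  have hT' : Continuous T' :=
    (ContinuousMap.isometryEquivBoundedOfCompact _ _).continuous.comp (map_continuous _)
  have hequi : Equicontinuous ((↑) : Set.range T' → AddCircle p → ℝ) := by
    refine equicontinuous_of_isOpenQuotientMap hquot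
      (LipschitzWith.uniformEquicontinuous _ K ?_).equicontinuous
    rintro ⟨_, x, rfl⟩
    exact hK x
  have hcompact : IsCompact (closure (Set.range T')) := by
    refine BoundedContinuousFunction.arzela_ascoli (Metric.closedBall 0 C)
      (isCompact_closedBall 0 C) _ ?_ hequi
    rintro _ y ⟨x, rfl⟩
    induction y using QuotientAddGroup.induction_on with
    | H θ => exact mem_closedBall_zero_iff.2 (hC x θ)
  obtain ⟨x, hx⟩ := exists_isFixedPt_of_forall_mem_isCompact hT' hcompact
    fun x => subset_closure (Set.mem_range_self x)
  exact ⟨x, fun θ => DFunLike.congr_fun hx (θ : AddCircle p)⟩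

end PeriodicFixedPoint

section Primitive

open Function

variable {f : ℝ → ℝ} {p B : ℝ}

theorem periodic_primitive (hper : Periodic f p) (hf : Continuous f)
    (hzero : ∫ s in 0..p, f s = 0) : Periodic (fun θ => ∫ s in 0..θ, f s) p := fun θ => by
  simpa [hzero] using hper.intervalIntegral_add_eq_add 0 θ fun _ _ => hf.intervalIntegrable _ _

theorem abs_primitive_le_of_periodic (hp : 0 < p) (hB : ∀ s, |f s| ≤ B)
    (hper : Periodic (fun θ => ∫ s in 0..θ, f s) p) (θ : ℝ) : |∫ s in 0..θ, f s| ≤ B * p := by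
  obtain ⟨θ₀, hθ₀, heq⟩ := hper.exists_mem_Ico₀ hp θ
  have hB₀ : 0 ≤ B := (abs_nonneg _).trans (hB 0)
  calc |∫ s in 0..θ, f s| = |∫ s in 0..θ₀, f s| := congrArg abs heq
    _ ≤ B * |θ₀ - 0| := by
        rw [← norm_eq_abs]
        exact intervalIntegral.norm_integral_le_of_norm_le_const fun s _ => hB s
    _ ≤ B * p := by
        rw [sub_zero, abs_of_nonneg hθ₀.1]
        exact mul_le_mul_of_nonneg_left hθ₀.2.le hB₀

theorem exists_abs_le_of_periodic (hp : p ≠ 0) (hper : Periodic f p) (hf : Continuous f) :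
    ∃ M, ∀ θ, |f θ| ≤ M := by
  obtain ⟨M, hM⟩ := (hper.isBounded_of_continuous hp hf).exists_norm_le
  exact ⟨M, fun θ => hM _ (Set.mem_range_self θ)⟩

theorem exists_pos_forall_add_two_mul_le {I : ℝ} (hp : p ≠ 0) (hper : Periodic f p)
    (hf : Continuous f) (hI : ∀ θ, f θ < I) : ∃ ε > 0, ∀ θ, f θ + 2 * ε ≤ I := by
  obtain ⟨_, ⟨θ₀, rfl⟩, hmax⟩ :=
    (hper.compact_of_continuous hp hf).exists_isGreatest (Set.range_nonempty f)
  refine ⟨(I - f θ₀) / 2, half_pos (sub_pos.2 (hI θ₀)), fun θ => ?_⟩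
  linarith [hmax (Set.mem_range_self θ)]

theorem periodic_of_hasDerivAt {f' : ℝ → ℝ} (hf : ∀ θ, HasDerivAt f (f' θ) θ)
    (hper : Periodic f p) : Periodic f' p := fun θ => by
  have hshift := (hf (θ + p)).comp_add_const θ p
  simp only [hper _] at hshift
  exact hshift.unique (hf θ)

end Primitive

section Profile

open Function
open scoped BoundedContinuousFunction

/-- The mean over one period of the force `g` along the phase `θ + x θ`. -/
noncomputable def meanForce (p : ℝ) (g x : ℝ → ℝ) : ℝ :=
  p⁻¹ * ∫ θ in 0..p, g (θ + x θ)

/-- The speed `ω` at which `ω t + x (ω t)` has to run in order to balance the mean of the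
equation, `2 ω + meanForce p g x = I`. -/
noncomputable def waveSpeed (p : ℝ) (g : ℝ → ℝ) (I : ℝ) (x : ℝ → ℝ) : ℝ :=
  (I - meanForce p g x) / 2

/-- The mean-zero right-hand side `(meanForce p g x - g (θ + x θ)) / ω` of the equation
`β ω x'' + x' + delayMean N p x' = F` for the profile `x`. -/
noncomputable def forceFluctuation (p : ℝ) (g : ℝ → ℝ) (I : ℝ) (x : ℝ → ℝ) (θ : ℝ) : ℝ :=
  (meanForce p g x - g (θ + x θ)) / waveSpeed p g I x

/-- The map whose fixed points are the profiles of rotating waves: the integrated profile equation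
`β ω x' + x + delayMean N p x = ∫ F`, solved for `x` on the left. -/
noncomputable def profileMap (N : ℕ) (p β : ℝ) (g : ℝ → ℝ) (I : ℝ) (x : ℝ → ℝ) : ℝ → ℝ :=
  delayedSolution N p (β * waveSpeed p g I x) fun θ => ∫ s in 0..θ, forceFluctuation p g I x s

variable {N : ℕ} {p β I ω₀ M : ℝ} {g x : ℝ → ℝ}

theorem exists_eq_meanForce (hp : p ≠ 0) (hg : Continuous g) (hx : Continuous x) :
    ∃ φ, g φ = meanForce p g x := by
  obtain ⟨θ, -, hθ⟩ := exists_eq_interval_average hp.symm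
    (f := fun θ => g (θ + x θ)) (Continuous.continuousOn (by fun_prop))
  exact ⟨θ + x θ, by simpa [interval_average_eq, meanForce] using hθ⟩

theorem le_waveSpeed (hp : p ≠ 0) (hg : Continuous g) (hx : Continuous x)
    (hω₀ : ∀ φ, g φ + 2 * ω₀ ≤ I) : ω₀ ≤ waveSpeed p g I x := by
  obtain ⟨φ, hφ⟩ := exists_eq_meanForce hp hg hx
  rw [waveSpeed, ← hφ]
  linarith [hω₀ φ]

theorem abs_forceFluctuation_le (hp : p ≠ 0) (hg : Continuous g) (hx : Continuous x)
    (hpos : 0 < ω₀) (hω₀ : ∀ φ, g φ + 2 * ω₀ ≤ I) (hM : ∀ φ, |g φ| ≤ M) (θ : ℝ) :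
    |forceFluctuation p g I x θ| ≤ 2 * M / ω₀ := by
  obtain ⟨φ, hφ⟩ := exists_eq_meanForce hp hg hx
  have hω := le_waveSpeed hp hg hx hω₀
  have hnum : |meanForce p g x - g (θ + x θ)| ≤ 2 * M := by
    rw [← hφ]
    linarith [abs_sub (g φ) (g (θ + x θ)), hM φ, hM (θ + x θ)]
  rw [forceFluctuation, abs_div, abs_of_pos (hpos.trans_le hω)]
  gcongr
  exact (abs_nonneg _).trans hnum

theorem continuous_forceFluctuation (hg : Continuous g) (hx : Continuous x) :
    Continuous (forceFluctuation p g I x) := by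
  unfold forceFluctuation
  fun_prop

theorem forceFluctuation_periodic (hg : Periodic g p) (hx : Periodic x p) :
    Periodic (forceFluctuation p g I x) p := fun θ => by
  rw [forceFluctuation, forceFluctuation, hx, add_right_comm, hg]

theorem integral_forceFluctuation (hp : p ≠ 0) (hg : Continuous g) (hx : Continuous x) :
    ∫ θ in 0..p, forceFluctuation p g I x θ = 0 := by
  have hint : IntervalIntegrable (fun θ => g (θ + x θ)) MeasureTheory.volume 0 p :=
    Continuous.intervalIntegrable (by fun_prop) _ _
  simp only [forceFluctuation, intervalIntegral.integral_div]
  rw [intervalIntegral.integral_sub intervalIntegrable_const hint]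
  simp [meanForce, hp]

theorem continuous_meanForce {X : Type*} [TopologicalSpace X] {x : X → ℝ → ℝ} (hg : Continuous g)
    (hx : Continuous (uncurry x)) : Continuous fun z => meanForce p g (x z) := by
  unfold meanForce
  fun_prop

theorem primitive_forceFluctuation_periodic (hp : p ≠ 0) (hg : Continuous g) (hgper : Periodic g p)
    (hx : Continuous x) (hxper : Periodic x p) :
    Periodic (fun θ => ∫ s in 0..θ, forceFluctuation p g I x s) p :=
  periodic_primitive (forceFluctuation_periodic hgper hxper) (continuous_forceFluctuation hg hx)
    (integral_forceFluctuation hp hg hx)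

theorem abs_primitive_forceFluctuation_le (hp : 0 < p) (hg : Continuous g) (hgper : Periodic g p)
    (hx : Continuous x) (hxper : Periodic x p) (hpos : 0 < ω₀) (hω₀ : ∀ φ, g φ + 2 * ω₀ ≤ I)
    (hM : ∀ φ, |g φ| ≤ M) (θ : ℝ) :
    |∫ s in 0..θ, forceFluctuation p g I x s| ≤ 2 * M / ω₀ * p :=
  abs_primitive_le_of_periodic hp (abs_forceFluctuation_le hp.ne' hg hx hpos hω₀ hM)
    (primitive_forceFluctuation_periodic hp.ne' hg hgper hx hxper) θ

theorem profileMap_periodic (hp : p ≠ 0) (hg : Continuous g) (hgper : Periodic g p)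
    (hx : Continuous x) (hxper : Periodic x p) : Periodic (profileMap N p β g I x) p :=
  delayedSolution_periodic (primitive_forceFluctuation_periodic hp hg hgper hx hxper)

theorem abs_profileMap_le (hp : 0 < p) (hg : Continuous g) (hgper : Periodic g p)
    (hx : Continuous x) (hxper : Periodic x p) (hpos : 0 < ω₀) (hω₀ : ∀ φ, g φ + 2 * ω₀ ≤ I)
    (hM : ∀ φ, |g φ| ≤ M) (θ : ℝ) :
    |profileMap N p β g I x θ| ≤ 3 * (2 * M / ω₀ * p) :=
  abs_delayedSolution_le (abs_primitive_forceFluctuation_le hp hg hgper hx hxper hpos hω₀ hM) θ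

theorem hasDerivAt_profileMap (hp : 0 < p) (hg : Continuous g) (hgper : Periodic g p)
    (hx : Continuous x) (hxper : Periodic x p) (hpos : 0 < ω₀) (hω₀ : ∀ φ, g φ + 2 * ω₀ ≤ I)
    (θ : ℝ) :
    HasDerivAt (profileMap N p β g I x)
      (delayedSolution N p (β * waveSpeed p g I x) (forceFluctuation p g I x) θ) θ := by
  obtain ⟨M, hM⟩ := exists_abs_le_of_periodic hp.ne' hgper hg
  have hcont : Continuous (forceFluctuation p g I x) := continuous_forceFluctuation hg hx
  exact hasDerivAt_delayedSolution (fun θ => (hcont.integral_hasStrictDerivAt 0 θ).hasDerivAt) hcont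
    (abs_primitive_forceFluctuation_le hp hg hgper hx hxper hpos hω₀ hM)
    (abs_forceFluctuation_le hp.ne' hg hx hpos hω₀ hM) θ

theorem lipschitzWith_profileMap (hp : 0 < p) (hg : Continuous g) (hgper : Periodic g p)
    (hx : Continuous x) (hxper : Periodic x p) (hpos : 0 < ω₀) (hω₀ : ∀ φ, g φ + 2 * ω₀ ≤ I)
    (hM : ∀ φ, |g φ| ≤ M) :
    LipschitzWith (3 * (2 * M / ω₀)).toNNReal (profileMap N p β g I x) := by
  have hderiv := hasDerivAt_profileMap (N := N) (β := β) hp hg hgper hx hxper hpos hω₀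
  refine lipschitzWith_of_nnnorm_deriv_le (fun θ => (hderiv θ).differentiableAt) fun θ => ?_
  rw [(hderiv θ).deriv, ← NNReal.coe_le_coe, coe_nnnorm]
  exact (abs_delayedSolution_le (abs_forceFluctuation_le hp.ne' hg hx hpos hω₀ hM) θ).trans
    (le_coe_toNNReal _)

theorem continuous_profileMap {X : Type*} [TopologicalSpace X] [FirstCountableTopology X]
    {x : X → ℝ → ℝ} {θ : X → ℝ} (hp : 0 < p) (hg : Continuous g) (hgper : Periodic g p)
    (hpos : 0 < ω₀) (hω₀ : ∀ φ, g φ + 2 * ω₀ ≤ I) (hM : ∀ φ, |g φ| ≤ M)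
    (hx : Continuous (uncurry x)) (hxper : ∀ z, Periodic (x z) p) (hθ : Continuous θ) :
    Continuous fun z => profileMap N p β g I (x z) (θ z) := by
  have hxz (z : X) : Continuous (x z) := hx.comp (Continuous.prodMk_right z)
  have hmean : Continuous fun z => meanForce p g (x z) := continuous_meanForce hg hx
  have hspeed : Continuous fun z => waveSpeed p g I (x z) := by
    unfold waveSpeed
    fun_prop
  have hspeed_ne (z : X) : waveSpeed p g I (x z) ≠ 0 :=
    (hpos.trans_le (le_waveSpeed hp.ne' hg (hxz z) hω₀)).ne'
  have hfluct : Continuous (uncurry fun z => forceFluctuation p g I (x z)) :=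
    ((hmean.comp continuous_fst).sub (hg.comp (continuous_snd.add hx))).div
      (hspeed.comp continuous_fst) fun z => hspeed_ne z.1
  exact continuous_delayedSolution (continuous_const.mul hspeed)
    (intervalIntegral.continuous_parametric_primitive_of_continuous hfluct)
    (fun z => abs_primitive_forceFluctuation_le hp hg hgper (hxz z) (hxper z) hpos hω₀ hM) hθ

theorem exists_profileMap_eq_self (hp : 0 < p) (hg : Continuous g) (hgper : Periodic g p)
    (hpos : 0 < ω₀) (hω₀ : ∀ φ, g φ + 2 * ω₀ ≤ I) :
    ∃ u, Continuous u ∧ Periodic u p ∧ profileMap N p β g I u = u := by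
  have : Fact (0 < p) := ⟨hp⟩
  obtain ⟨M, hM⟩ := exists_abs_le_of_periodic hp.ne' hgper hg
  have hcont (x : AddCircle p →ᵇ ℝ) : Continuous fun θ : ℝ => x θ :=
    x.continuous.comp (AddCircle.continuous_mk' p)
  have hper (x : AddCircle p →ᵇ ℝ) : Periodic (fun θ : ℝ => x θ) p := fun θ => by
    simp only [AddCircle.coe_add_period]
  obtain ⟨u, hu⟩ := exists_forall_eq_of_periodic_of_lipschitzWith
    (T := fun x => profileMap N p β g I fun θ => x θ)
    (continuous_profileMap hp hg hgper hpos hω₀ hM (by fun_prop) (fun z => hper z.1) continuous_snd)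
    (fun x => profileMap_periodic hp.ne' hg hgper (hcont x) (hper x))
    (fun x => abs_profileMap_le hp hg hgper (hcont x) (hper x) hpos hω₀ hM)
    (fun x => lipschitzWith_profileMap hp hg hgper (hcont x) (hper x) hpos hω₀ hM)
  exact ⟨fun θ => u θ, hcont u, hper u, funext hu⟩

theorem hasDerivAt_forceFluctuation {x' : ℝ → ℝ} (hg : Differentiable ℝ g)
    (hx : ∀ θ, HasDerivAt x (x' θ) θ) (θ : ℝ) :
    HasDerivAt (forceFluctuation p g I x)
      (-(deriv g (θ + x θ) * (1 + x' θ)) / waveSpeed p g I x) θ :=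
  (((hg _).hasDerivAt.comp θ ((hasDerivAt_id θ).add (hx θ))).const_sub _).div_const _

theorem exists_hasDerivAt_of_profileMap_eq_self {u : ℝ → ℝ} (hp : 0 < p) (hg : ContDiff ℝ 1 g)
    (hgper : Periodic g p) (hpos : 0 < ω₀) (hω₀ : ∀ φ, g φ + 2 * ω₀ ≤ I) (hu : Continuous u)
    (huper : Periodic u p) (hfix : profileMap N p β g I u = u) :
    ∃ u' u'' : ℝ → ℝ, (∀ θ, HasDerivAt u (u' θ) θ) ∧ (∀ θ, HasDerivAt u' (u'' θ) θ) ∧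
      Continuous u'' ∧ ∀ θ, β * waveSpeed p g I u * u'' θ + u' θ + delayMean N p u' θ =
        forceFluctuation p g I u θ := by
  obtain ⟨M, hM⟩ := exists_abs_le_of_periodic hp.ne' hgper hg.continuous
  set ω := waveSpeed p g I u
  set F := forceFluctuation p g I u
  set u' := delayedSolution N p (β * ω) F
  have hF : Continuous F := continuous_forceFluctuation hg.continuous hu
  have hFper : Periodic F p := forceFluctuation_periodic hgper huper
  have hFM : ∀ θ, |F θ| ≤ 2 * M / ω₀ := abs_forceFluctuation_le hp.ne' hg.continuous hu hpos hω₀ hM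
  have hu' (θ : ℝ) : HasDerivAt u (u' θ) θ := by
    simpa only [hfix] using
      hasDerivAt_profileMap (N := N) (β := β) hp hg.continuous hgper hu huper hpos hω₀ θ
  have hu'_cont : Continuous u' :=
    continuous_delayedSolution continuous_const (hF.comp continuous_snd) (fun _ => hFM)
      continuous_id
  have hF' : ∀ θ, HasDerivAt F (-(deriv g (θ + u θ) * (1 + u' θ)) / ω) θ :=
    hasDerivAt_forceFluctuation (hg.differentiable one_ne_zero) hu'
  have hF'_cont : Continuous fun θ => -(deriv g (θ + u θ) * (1 + u' θ)) / ω := by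
    have := hg.continuous_deriv le_rfl
    fun_prop
  obtain ⟨M', hM'⟩ := exists_abs_le_of_periodic hp.ne' (periodic_of_hasDerivAt hF' hFper) hF'_cont
  exact ⟨u', _, hu', hasDerivAt_delayedSolution hF' hF'_cont hFM hM',
    continuous_delayedSolution continuous_const (hF'_cont.comp continuous_snd) (fun _ => hM')
      continuous_id, mul_delayedSolution_add_eq hF' hF'_cont hFM hM' hFper⟩

theorem exists_periodic_profile (N : ℕ) (β : ℝ) (hp : 0 < p) (hg : ContDiff ℝ 1 g)
    (hgper : Periodic g p) (hgI : ∀ φ, g φ < I) :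
    ∃ (ω : ℝ) (u u' u'' : ℝ → ℝ), 0 < ω ∧ Periodic u p ∧ (∀ θ, HasDerivAt u (u' θ) θ) ∧
      (∀ θ, HasDerivAt u' (u'' θ) θ) ∧ Continuous u'' ∧
      ∀ θ, β * ω ^ 2 * u'' θ + ω * u' θ + g (θ + u θ) + ω * delayMean N p u' θ = I - 2 * ω := by
  obtain ⟨ω₀, hpos, hω₀⟩ := exists_pos_forall_add_two_mul_le hp.ne' hgper hg.continuous hgI
  obtain ⟨u, hu, huper, hfix⟩ :=
    exists_profileMap_eq_self (N := N) (β := β) hp hg.continuous hgper hpos hω₀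
  have hω : 0 < waveSpeed p g I u := hpos.trans_le (le_waveSpeed hp.ne' hg.continuous hu hω₀)
  obtain ⟨u', u'', hu', hu'', hu''_cont, heq⟩ :=
    exists_hasDerivAt_of_profileMap_eq_self hp hg hgper hpos hω₀ hu huper hfix
  refine ⟨waveSpeed p g I u, u, u', u'', hω, huper, hu', hu'', hu''_cont, fun θ => ?_⟩
  have hforce : waveSpeed p g I u * forceFluctuation p g I u θ = meanForce p g u - g (θ + u θ) :=
    mul_div_cancel₀ _ hω.ne'
  have hspeed : 2 * waveSpeed p g I u = I - meanForce p g u := mul_div_cancel₀ _ two_ne_zero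
  linear_combination waveSpeed p g I u * heq θ + hforce + hspeed

end Profile

section RotatingWave

theorem contDiff_two_of_hasDerivAt {𝕜 F : Type*} [NontriviallyNormedField 𝕜]
    [NormedAddCommGroup F] [NormedSpace 𝕜 F] {f f' f'' : 𝕜 → F} (hf : ∀ t, HasDerivAt f (f' t) t)
    (hf' : ∀ t, HasDerivAt f' (f'' t) t) (hf'' : Continuous f'') : ContDiff 𝕜 2 f := by
  have hderiv : deriv f = f' := funext fun t => (hf t).deriv
  have hderiv' : deriv f' = f'' := funext fun t => (hf' t).deriv
  rw [← one_add_one_eq_two, contDiff_succ_iff_deriv, hderiv, contDiff_one_iff_deriv, hderiv']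
  exact ⟨fun t => (hf t).differentiableAt, by simp,
    fun t => (hf' t).differentiableAt, hf''⟩

theorem isRunning_mul_add_comp_mul {ω : ℝ} {u : ℝ → ℝ} (hω : ω ≠ 0)
    (hu : Function.Periodic u (2 * π)) : IsRunning (fun t => ω * t + u (ω * t)) (2 * π / ω) :=
  fun t => by
    simp only [mul_add, mul_div_cancel₀ _ hω, hu (ω * t)]
    ring

theorem mean_sum_add_mul_comp_mul {N : ℕ} (hN : N ≠ 0) {ω : ℝ} (hω : ω ≠ 0) (p : ℝ) (v : ℝ → ℝ)
    (t : ℝ) :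
    1 / (N : ℝ) * ∑ k ∈ Finset.range N, (ω + ω * v (ω * (t - k * (p / ω) / N))) =
      ω + ω * delayMean N p v (ω * t) := by
  have hdelay (k : ℕ) : ω * (t - k * (p / ω) / N) = ω * t - k * p / N := by
    field_simp
  simp only [hdelay, delayMean, Finset.sum_add_distrib, Finset.sum_const, Finset.card_range,
    nsmul_eq_mul, ← Finset.mul_sum]
  rw [mul_add, one_div, inv_mul_cancel_left₀ (Nat.cast_ne_zero.2 hN)]
  ring

theorem agmp_pom_existence_general (N : ℕ) (hN : 1 ≤ N) (β I : ℝ) (g : ℝ → ℝ) (hg : ContDiff ℝ 1 g)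
    (hgper : Function.Periodic g (2 * π)) (hgI : ∀ φ, g φ < I) :
    ∃ (T : ℝ) (ψ : ℝ → ℝ), 0 < T ∧ ContDiff ℝ 2 ψ ∧ IsRunning ψ T ∧
      ∀ t : ℝ,
        β * deriv (deriv ψ) t + deriv ψ t + g (ψ t) +
          (1 / (N : ℝ)) *
            ∑ k ∈ Finset.range N, deriv ψ (t - (k : ℝ) * T / (N : ℝ)) = I := by
  obtain ⟨ω, u, u', u'', hω, hper, hu, hu', hu''_cont, heq⟩ :=
    exists_periodic_profile N β two_pi_pos hg hgper hgI
  have hψ (t : ℝ) : HasDerivAt (fun t => ω * t + u (ω * t)) (ω + ω * u' (ω * t)) t :=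
    ((hasDerivAt_const_mul ω).add ((hu _).comp t (hasDerivAt_const_mul ω))).congr_deriv (by ring)
  have hψ' (t : ℝ) : HasDerivAt (fun t => ω + ω * u' (ω * t)) (ω ^ 2 * u'' (ω * t)) t :=
    ((((hu' _).comp t (hasDerivAt_const_mul ω)).const_mul ω).const_add ω).congr_deriv (by ring)
  refine ⟨2 * π / ω, fun t => ω * t + u (ω * t), by positivity,
    contDiff_two_of_hasDerivAt hψ hψ' (by fun_prop), isRunning_mul_add_comp_mul hω.ne' hper,
    fun t => ?_⟩
  rw [funext fun t => (hψ t).deriv, (hψ' t).deriv,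
    mean_sum_add_mul_comp_mul (Nat.one_le_iff_ne_zero.1 hN) hω.ne']
  linear_combination heq (ω * t)

end RotatingWave

/-- **(Aronson–Golubitsky–Mallet-Paret.)** For `N ≥ 1`, `β > 0` and `I > 1` there exist
`T > 0` and a running function `ψ` of period `T` satisfying the delay-differential
equation `β ψ''(t) + ψ'(t) + sin (ψ(t)) + (1/N) ∑_{k=0}^{N−1} ψ'(t − kT/N) = I`;
that is, the resistively loaded array admits a discrete rotating wave
(pony-on-a-merry-go-round) solution `φ_j(t) = ψ(t − (j−1)T/N)`. -/
theorem agmp_pom_existence (N : ℕ) (hN : 1 ≤ N) (β I : ℝ) (hβ : 0 < β) (hI : 1 < I) :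
    ∃ (T : ℝ) (ψ : ℝ → ℝ), 0 < T ∧ ContDiff ℝ 2 ψ ∧ IsRunning ψ T ∧
      ∀ t : ℝ,
        β * deriv (deriv ψ) t + deriv ψ t + Real.sin (ψ t) +
          (1 / (N : ℝ)) *
            ∑ k ∈ Finset.range N, deriv ψ (t - (k : ℝ) * T / (N : ℝ)) = I :=
  agmp_pom_existence_general N hN β I sin contDiff_sin sin_periodic fun φ =>
    (sin_le_one φ).trans_lt hI
end

section
/- (Aronson–Huang, uniqueness of DRWs) Let β > 0 and I > 1. Then there exists N₀ such that for every N > N₀ the discrete rotating wave solution of the resistively loaded array β φ_k'' + φ_k' + sin(φ_k) + (1/N) Σ_{j=1}^N φ_j' = I is unique up to permutation of the junction indices and time shift: any two DRW solutions with waveforms ψ, ψ̃ and periods T, T̃ satisfy T = T̃ and ψ̃(t) = ψ(t − s) for some s ∈ ℝ. -/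
open Real

/-- `ψ` is the waveform of a discrete rotating wave solution of period `T` of the
resistively loaded array `β φ_k'' + φ_k' + sin (φ_k) + (1/N) ∑_j φ_j' = I`:
`ψ` is a running function of period `T` and `φ_j(t) = ψ(t − (j−1)T/N)` solves the
system. -/
def IsDRWRes (N : ℕ) (β I : ℝ) (ψ : ℝ → ℝ) (T : ℝ) : Prop :=
  0 < T ∧ ContDiff ℝ 2 ψ ∧ IsRunning ψ T ∧
  (∀ k : Fin N, ∀ t : ℝ,
    β * deriv (deriv (fun s => ψ (s - ((k : ℕ) : ℝ) * T / (N : ℝ)))) t +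
      deriv (fun s => ψ (s - ((k : ℕ) : ℝ) * T / (N : ℝ))) t +
      Real.sin (ψ (t - ((k : ℕ) : ℝ) * T / (N : ℝ))) +
      (1 / (N : ℝ)) *
        ∑ j : Fin N, deriv (fun s => ψ (s - ((j : ℕ) : ℝ) * T / (N : ℝ))) t = I)

/-!
In a discrete rotating wave every junction is a pendulum `β ψ'' + ψ' + sin ψ = J` whose drive is
`J = I - m`, where the average `m` of the speed `ψ'` over the `N` equidistant shifts by multiples
of `T / N` equals its mean `2π / T` up to a ripple of size `O(1 / N)`. A drive that is nearly
constant keeps the speed above a positive constant uniform in `N`: an energy balance excludes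
swinging back, and by Gronwall's inequality a wave that comes close to rest at a minimum of the
speed cannot complete a turn within the a priori bound on the period.

Two waves with positive speed can be compared at equal phase, where the difference of the squared
speeds solves a linear equation forced by the difference of the drives. Hence all differences
between the waves are bounded by the difference of the drives, and since averaging gains a factor
`1 / N`, the difference of the ripples is at most half of `|2π / T₁ - 2π / T₂|`. If `T₂ < T₁`, the
first wave would therefore have the larger drive at every phase and thus the smaller period, a
contradiction. So `T₁ = T₂`, the drives agree at equal phase, and the waves differ by a time shift.
-/

section Calculus

variable {f f' : ℝ → ℝ} {T : ℝ}

theorem continuous_of_forall_hasDerivAt (hf : ∀ t, HasDerivAt f (f' t) t) : Continuous f :=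
  continuous_iff_continuousAt.2 fun t => (hf t).continuousAt

theorem exists_sub_eq_mul_sub (hf : ∀ t, HasDerivAt f (f' t) t) {x y : ℝ} (hxy : x < y) :
    ∃ z ∈ Set.Ioo x y, f y - f x = f' z * (y - x) := by
  obtain ⟨z, hz, hslope⟩ := exists_hasDerivAt_eq_slope f f' hxy
    (continuous_of_forall_hasDerivAt hf).continuousOn fun t _ => hf t
  exact ⟨z, hz, by rw [hslope, div_mul_cancel₀ _ (sub_pos.2 hxy).ne']⟩

theorem sub_le_mul_sub_of_hasDerivAt_le {C : ℝ} (hf : ∀ t, HasDerivAt f (f' t) t)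
    (hC : ∀ t, f' t ≤ C) {x y : ℝ} (hxy : x ≤ y) : f y - f x ≤ C * (y - x) :=
  image_sub_le_mul_sub_of_deriv_le (fun t => (hf t).differentiableAt)
    (fun t => (hf t).deriv.trans_le (hC t)) hxy

theorem abs_sub_le_mul_abs_sub {C : ℝ} (hf : ∀ t, HasDerivAt f (f' t) t)
    (hC : ∀ t, |f' t| ≤ C) (x y : ℝ) : |f x - f y| ≤ C * |x - y| := by
  simpa using Convex.norm_image_sub_le_of_norm_hasDerivWithin_le
    (fun t _ => (hf t).hasDerivWithinAt) (fun t _ => hC t) convex_univ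
    (Set.mem_univ y) (Set.mem_univ x)

theorem exists_critical_forall_le (hT : T ≠ 0) (hper : Function.Periodic f T)
    (hf : ∀ t, HasDerivAt f (f' t) t) : ∃ x, f' x = 0 ∧ ∀ t, f x ≤ f t := by
  obtain ⟨_, ⟨x, rfl⟩, hx⟩ :=
    (hper.compact_of_continuous hT (continuous_of_forall_hasDerivAt hf)).exists_isLeast
      (Set.range_nonempty f)
  have hmin : ∀ t, f x ≤ f t := fun t => hx ⟨t, rfl⟩
  exact ⟨x, IsLocalMin.hasDerivAt_eq_zero (.of_forall hmin) (hf x), hmin⟩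

theorem mem_Icc_of_critical_mem_Icc {l u : ℝ} (hT : T ≠ 0) (hper : Function.Periodic f T)
    (hf : ∀ t, HasDerivAt f (f' t) t) (hcrit : ∀ x, f' x = 0 → f x ∈ Set.Icc l u) (t : ℝ) :
    f t ∈ Set.Icc l u := by
  obtain ⟨x, hx, hmin⟩ := exists_critical_forall_le hT hper hf
  obtain ⟨y, hy, hmax⟩ := exists_critical_forall_le (f := fun t => -f t) hT
    (fun t => congrArg Neg.neg (hper t)) fun t => (hf t).neg
  exact ⟨(hcrit x hx).1.trans (hmin t),
    (neg_le_neg_iff.1 (hmax t)).trans (hcrit y (neg_eq_zero.1 hy)).2⟩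

theorem exists_critical_of_lt_of_deriv_neg (hf : ∀ t, HasDerivAt f (f' t) t) {x y : ℝ}
    (hxy : x < y) (hlt : f x < f y) (hy : f' y < 0) :
    ∃ z ∈ Set.Ioo x y, f' z = 0 ∧ f y ≤ f z := by
  obtain ⟨z, hz, hmax⟩ := isCompact_Icc.exists_isMaxOn (Set.nonempty_Icc.2 hxy.le)
    (continuous_of_forall_hasDerivAt hf).continuousOn
  have hyz : f y ≤ f z := hmax (Set.right_mem_Icc.2 hxy.le)
  have hzx : z ≠ x := by
    rintro rfl
    exact hlt.not_ge hyz
  have hzy : z ≠ y := by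
    rintro rfl
    have hcone : x - z ∈ posTangentConeAt (Set.Icc x z) z :=
      sub_mem_posTangentConeAt_of_segment_subset (by rw [segment_symm, segment_eq_Icc hxy.le])
    have hslope : (x - z) * f' z ≤ 0 := by
      simpa using hmax.localize.hasFDerivWithinAt_nonpos
        (hf z).hasDerivWithinAt.hasFDerivWithinAt hcone
    exact hslope.not_gt (mul_pos_of_neg_of_neg (sub_neg.2 hxy) hy)
  have hzI : z ∈ Set.Ioo x y := ⟨hz.1.lt_of_ne' hzx, hz.2.lt_of_ne hzy⟩
  exact ⟨z, hzI, (hmax.isLocalMax (Icc_mem_nhds hzI.1 hzI.2)).hasDerivAt_eq_zero (hf z), hyz⟩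

theorem le_mul_exp_of_deriv_le_mul {K : ℝ} (hf : ∀ t, HasDerivAt f (f' t) t)
    (hK : ∀ t, f' t ≤ K * f t) {s t : ℝ} (hst : s ≤ t) : f t ≤ f s * exp (K * (t - s)) := by
  rw [← gronwallBound_ε0]
  exact le_gronwallBound_of_liminf_deriv_right_le
    (continuous_of_forall_hasDerivAt hf).continuousOn
    (fun x _ r hr => (hf x).hasDerivWithinAt.liminf_right_slope_le hr) le_rfl
    (fun x _ => by simpa using hK x) t ⟨hst, le_rfl⟩

theorem surjective_of_le_deriv {a : ℝ} (ha : 0 < a) (hf : ∀ t, HasDerivAt f (f' t) t)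
    (hf' : ∀ t, a ≤ f' t) : Function.Surjective f := by
  have hgrow : ∀ {x y : ℝ}, x ≤ y → a * (y - x) ≤ f y - f x := fun hxy =>
    mul_sub_le_image_sub_of_le_deriv (fun t => (hf t).differentiableAt)
      (fun t => (hf' t).trans_eq (hf t).deriv.symm) hxy
  have hlinear_top : Filter.Tendsto (fun t => a * t + f 0) .atTop .atTop :=
    Filter.tendsto_atTop_add_const_right _ _ (Filter.tendsto_id.const_mul_atTop ha)
  have hlinear_bot : Filter.Tendsto (fun t => a * t + f 0) .atBot .atBot :=
    Filter.tendsto_atBot_add_const_right _ _ (Filter.tendsto_id.const_mul_atBot ha)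
  refine (continuous_of_forall_hasDerivAt hf).surjective ?_ ?_
  · refine Filter.tendsto_atTop_mono' _ ?_ hlinear_top
    filter_upwards [Filter.eventually_ge_atTop 0] with t ht
    linarith [hgrow ht]
  · refine Filter.tendsto_atBot_mono' _ ?_ hlinear_bot
    filter_upwards [Filter.eventually_le_atBot 0] with t ht
    linarith [hgrow ht]

end Calculus

theorem le_half_of_forall_bound_improves {X : Type*} [Nonempty X] {f : X → ℝ} {d : ℝ}
    (hbdd : BddAbove (Set.range f))
    (himprove : ∀ S, (∀ x, f x ≤ S) → ∀ x, f x ≤ (d + S) / 3) (x : X) : f x ≤ d / 2 := by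
  have hsup : ⨆ x, f x ≤ (d + ⨆ x, f x) / 3 := ciSup_le (himprove _ (le_ciSup hbdd))
  linarith [le_ciSup hbdd x]

/-- The average of `f` over the `N` shifts `t - j T / N`, `0 ≤ j < N`; applied to the speed of
the waveform it is the collective term of the array equation. -/
noncomputable def shiftAvg (N : ℕ) (T : ℝ) (f : ℝ → ℝ) (t : ℝ) : ℝ :=
  (1 / (N : ℝ)) * ∑ j : Fin N, f (t - ((j : ℕ) : ℝ) * T / (N : ℝ))

section ShiftAverage

variable {N : ℕ} {T : ℝ} {F f f' g : ℝ → ℝ}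

theorem hasDerivAt_shiftAvg (hf : ∀ t, HasDerivAt f (f' t) t) (t : ℝ) :
    HasDerivAt (shiftAvg N T f) (shiftAvg N T f' t) t :=
  (HasDerivAt.fun_sum fun _ _ => (hf _).comp_sub_const _ _).const_mul _

theorem shiftAvg_sub (t : ℝ) :
    shiftAvg N T (fun s => f s - g s) t = shiftAvg N T f t - shiftAvg N T g t := by
  simp only [shiftAvg, Finset.sum_sub_distrib, mul_sub]

theorem shiftAvg_div (b t : ℝ) : shiftAvg N T (fun s => f s / b) t = shiftAvg N T f t / b := by
  simp only [shiftAvg, ← Finset.sum_div, mul_div_assoc]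

theorem shiftAvg_comp_affine (r b t : ℝ) :
    shiftAvg N T (fun s => f (r * s + b)) t = shiftAvg N (r * T) f (r * t + b) := by
  refine congrArg _ (Finset.sum_congr rfl fun j _ => congrArg f ?_)
  ring

theorem shiftAvg_eq_self (hN : N ≠ 0) (hf : Function.Periodic f (T / N)) (t : ℝ) :
    shiftAvg N T f t = f t := by
  have hN' : (N : ℝ) ≠ 0 := Nat.cast_ne_zero.2 hN
  simp [shiftAvg, mul_div_assoc, hf.sub_nat_mul_eq, hN']

theorem shiftAvg_add_div (hN : N ≠ 0) {R : ℝ} (hF : ∀ t, F (t + T) = F t + R) (t : ℝ) :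
    shiftAvg N T F (t + T / N) = shiftAvg N T F t + R / N := by
  obtain ⟨n, rfl⟩ := Nat.exists_eq_succ_of_ne_zero hN
  have hpos : ((n + 1 : ℕ) : ℝ) ≠ 0 := by positivity
  have hsucc (k : Fin n) : t + T / (n + 1 : ℕ) - ((k.succ : ℕ) : ℝ) * T / (n + 1 : ℕ) =
      t - ((k : ℕ) : ℝ) * T / (n + 1 : ℕ) := by
    push_cast [Fin.val_succ]
    ring
  have hzero : t + T / (n + 1 : ℕ) - (((0 : Fin (n + 1)) : ℕ) : ℝ) * T / (n + 1 : ℕ) =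
      t - (n : ℝ) * T / (n + 1 : ℕ) + T := by
    rw [Fin.val_zero]
    field_simp
    push_cast
    ring
  unfold shiftAvg
  rw [Fin.sum_univ_succ, Fin.sum_univ_castSucc, hzero, hF]
  simp only [hsucc, Fin.val_castSucc, Fin.val_last]
  ring

theorem periodic_shiftAvg (hN : N ≠ 0) (hf : Function.Periodic f T) :
    Function.Periodic (shiftAvg N T f) (T / N) := fun t => by
  simpa using shiftAvg_add_div hN (R := 0) (by simpa using hf) t

theorem shiftAvg_mem_Icc (hN : N ≠ 0) {l u : ℝ} (hf : ∀ t, f t ∈ Set.Icc l u) (t : ℝ) :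
    shiftAvg N T f t ∈ Set.Icc l u := by
  have hN' : (0 : ℝ) < N := by positivity
  rw [shiftAvg, one_div, inv_mul_eq_div]
  constructor
  · rw [le_div_iff₀ hN']
    simpa [mul_comm] using Finset.card_nsmul_le_sum Finset.univ _ l fun (j : Fin N) _ =>
      (hf (t - ((j : ℕ) : ℝ) * T / N)).1
  · rw [div_le_iff₀ hN']
    simpa [mul_comm] using Finset.sum_le_card_nsmul Finset.univ _ u fun (j : Fin N) _ =>
      (hf (t - ((j : ℕ) : ℝ) * T / N)).2

theorem abs_shiftAvg_le (hN : N ≠ 0) {B : ℝ} (hf : ∀ t, |f t| ≤ B) (t : ℝ) :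
    |shiftAvg N T f t| ≤ B :=
  abs_le.2 (shiftAvg_mem_Icc hN (fun s => abs_le.1 (hf s)) t)

theorem exists_shiftAvg_eq_div (hN : N ≠ 0) (hT : 0 < T) {R : ℝ}
    (hF : ∀ t, HasDerivAt F (f t) t) (hR : ∀ t, F (t + T) = F t + R) (t : ℝ) :
    ∃ z ∈ Set.Ioo t (t + T / N), shiftAvg N T f z = R / T := by
  have hN' : (0 : ℝ) < N := by positivity
  obtain ⟨z, hz, hslope⟩ := exists_sub_eq_mul_sub (hasDerivAt_shiftAvg hF)
    (lt_add_of_pos_right t (div_pos hT hN'))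
  refine ⟨z, hz, ?_⟩
  rw [shiftAvg_add_div hN hR] at hslope
  field_simp at hslope ⊢
  linarith

theorem abs_shiftAvg_sub_div_le (hN : N ≠ 0) (hT : 0 < T) {R B : ℝ}
    (hF : ∀ t, HasDerivAt F (f t) t) (hf : ∀ t, HasDerivAt f (f' t) t)
    (hR : ∀ t, F (t + T) = F t + R) (hB : ∀ t, |f' t| ≤ B) (t : ℝ) :
    |shiftAvg N T f t - R / T| ≤ B * (T / N) := by
  obtain ⟨z, hz, hzR⟩ := exists_shiftAvg_eq_div hN hT hF hR t
  have hB₀ : 0 ≤ B := (abs_nonneg _).trans (hB 0)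
  have htz : |t - z| ≤ T / N := abs_le.2 ⟨by linarith [hz.2], by linarith [hz.1, hz.2]⟩
  calc |shiftAvg N T f t - R / T| = |shiftAvg N T f t - shiftAvg N T f z| := by rw [hzR]
    _ ≤ B * |t - z| := abs_sub_le_mul_abs_sub (hasDerivAt_shiftAvg hf) (abs_shiftAvg_le hN hB) t z
    _ ≤ B * (T / N) := by gcongr

end ShiftAverage

theorem IsRunning.periodic_of_hasDerivAt {ψ v : ℝ → ℝ} {T : ℝ} (hrun : IsRunning ψ T)
    (hψ : ∀ t, HasDerivAt ψ (v t) t) : Function.Periodic v T := fun t => by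
  have hshift : HasDerivAt (fun s => ψ (s + T)) (v t) t := by
    rw [funext hrun]
    exact (hψ t).add_const _
  exact ((hψ (t + T)).comp_add_const t T).unique hshift

/-- The acceleration which the pendulum equation `β ψ'' + ψ' + sin ψ = J` prescribes along a
motion with phase `ψ` and speed `v`. -/
noncomputable def pendulumAccel (β : ℝ) (J ψ v : ℝ → ℝ) (t : ℝ) : ℝ :=
  (J t - v t - sin (ψ t)) / β

theorem mul_pendulumAccel {β : ℝ} (hβ : β ≠ 0) (J ψ v : ℝ → ℝ) (t : ℝ) :
    β * pendulumAccel β J ψ v t = J t - v t - sin (ψ t) :=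
  mul_div_cancel₀ _ hβ

theorem speed_eq_of_pendulumAccel_eq_zero {β : ℝ} (hβ : β ≠ 0) {J ψ v : ℝ → ℝ} {t : ℝ}
    (ht : pendulumAccel β J ψ v t = 0) : v t = J t - sin (ψ t) := by
  have hforce := mul_pendulumAccel hβ J ψ v t
  rw [ht] at hforce
  linarith

/-- A running solution of the damped pendulum equation `β ψ'' + ψ' + sin ψ = J` with drive
`J = J(t)`, encoded as a planar system for the phase `ψ` and the speed `v`. -/
structure IsPendulumWave (β : ℝ) (J ψ v : ℝ → ℝ) (T : ℝ) : Prop where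
  period_pos : 0 < T
  running : IsRunning ψ T
  hasDerivAt_phase (t : ℝ) : HasDerivAt ψ (v t) t
  hasDerivAt_speed (t : ℝ) : HasDerivAt v (pendulumAccel β J ψ v t) t

/-- A running pendulum solution with speed in `[a, M]`, acceleration at most `L` in absolute
value and period at most `T₀`: the quantities on which all estimates depend. -/
structure IsBoundedPendulumWave (β a M L T₀ : ℝ) (J ψ v : ℝ → ℝ) (T : ℝ) : Prop
    extends IsPendulumWave β J ψ v T where
  speed_mem (t : ℝ) : v t ∈ Set.Icc a M
  abs_accel_le (t : ℝ) : |pendulumAccel β J ψ v t| ≤ L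
  period_le : T ≤ T₀

/-- The energy of the pendulum with constant drive `J₀` at phase `x` and speed `y`. -/
noncomputable def pendulumEnergy (β J₀ x y : ℝ) : ℝ :=
  β * y ^ 2 / 2 - cos x - J₀ * x

namespace IsPendulumWave

variable {β J₀ ε L P T : ℝ} {J ψ v : ℝ → ℝ} (W : IsPendulumWave β J ψ v T)
include W

theorem periodic_speed : Function.Periodic v T :=
  W.running.periodic_of_hasDerivAt W.hasDerivAt_phase

theorem speed_mem_Icc (hβ : β ≠ 0) {l u : ℝ} (hJ : ∀ t, J t ∈ Set.Icc l u) (t : ℝ) :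
    v t ∈ Set.Icc (l - 1) (u + 1) := by
  refine mem_Icc_of_critical_mem_Icc W.period_pos.ne' W.periodic_speed W.hasDerivAt_speed
    (fun x hx => ?_) t
  rw [speed_eq_of_pendulumAccel_eq_zero hβ hx]
  exact ⟨sub_le_sub (hJ x).1 (sin_le_one _), by linarith [(hJ x).2, neg_one_le_sin (ψ x)]⟩

theorem abs_accel_le_of_drive_mem_Icc (hβ : 0 < β) {l u : ℝ} (hJ : ∀ t, J t ∈ Set.Icc l u)
    (t : ℝ) : |pendulumAccel β J ψ v t| ≤ (u - l + 2) / β := by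
  have hv := W.speed_mem_Icc hβ.ne' hJ t
  rw [pendulumAccel, abs_div, abs_of_pos hβ]
  gcongr
  rw [abs_le]
  constructor <;>
    linarith [hv.1, hv.2, (hJ t).1, (hJ t).2, neg_one_le_sin (ψ t), sin_le_one (ψ t)]

theorem exists_speed_eq_mean (t : ℝ) : ∃ z ∈ Set.Ioo t (t + T), v z = 2 * π / T := by
  obtain ⟨z, hz, hslope⟩ := exists_sub_eq_mul_sub W.hasDerivAt_phase
    (lt_add_of_pos_right t W.period_pos)
  refine ⟨z, hz, (eq_div_iff W.period_pos.ne').2 ?_⟩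
  rw [W.running t] at hslope
  linarith

theorem hasDerivAt_energy (hβ : β ≠ 0) (J₀ t : ℝ) :
    HasDerivAt (fun s => pendulumEnergy β J₀ (ψ s) (v s)) (v t * (J t - J₀) - v t ^ 2) t := by
  refine ((((((W.hasDerivAt_speed t).pow 2).const_mul β).div_const 2).sub
    (W.hasDerivAt_phase t).cos).sub ((W.hasDerivAt_phase t).const_mul J₀)).congr_deriv ?_
  norm_num
  linear_combination v t * mul_pendulumAccel hβ J ψ v t

theorem energy_sub_le (hβ : β ≠ 0) (hJ : ∀ t, v t * (J t - J₀) ≤ P) {s t : ℝ} (hst : s ≤ t) :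
    pendulumEnergy β J₀ (ψ t) (v t) - pendulumEnergy β J₀ (ψ s) (v s) ≤ P * (t - s) :=
  sub_le_mul_sub_of_hasDerivAt_le (W.hasDerivAt_energy hβ J₀)
    (fun x => (sub_le_self _ (sq_nonneg (v x))).trans (hJ x)) hst

-- Since `v'` is at least `-L`, the dissipated energy `∫ v ^ 2` controls the change of `v ^ 3`.
theorem energy_sub_sub_speed_pow_three_le (hβ : β ≠ 0)
    (hL : ∀ t, |pendulumAccel β J ψ v t| ≤ L) (hJ : ∀ t, v t * (J t - J₀) ≤ P) {s t : ℝ}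
    (hst : s ≤ t) :
    3 * L * (pendulumEnergy β J₀ (ψ t) (v t) - pendulumEnergy β J₀ (ψ s) (v s)) -
      (v t ^ 3 - v s ^ 3) ≤ 3 * L * P * (t - s) := by
  have hderiv (x : ℝ) :
      HasDerivAt (fun x => 3 * L * pendulumEnergy β J₀ (ψ x) (v x) - v x ^ 3)
        (3 * L * (v x * (J x - J₀) - v x ^ 2) - 3 * v x ^ 2 * pendulumAccel β J ψ v x) x := by
    simpa using ((W.hasDerivAt_energy hβ J₀ x).const_mul (3 * L)).fun_sub
      ((W.hasDerivAt_speed x).fun_pow 3)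
  have hbound (x : ℝ) : 3 * L * (v x * (J x - J₀) - v x ^ 2) -
      3 * v x ^ 2 * pendulumAccel β J ψ v x ≤ 3 * L * P := by
    have hgain := mul_le_mul_of_nonneg_left (hJ x) ((abs_nonneg _).trans (hL 0))
    have hloss := mul_le_mul_of_nonneg_right (neg_le_of_abs_le (hL x)) (sq_nonneg (v x))
    linarith
  linarith [sub_le_mul_sub_of_hasDerivAt_le hderiv hbound hst]

theorem exists_rest_and_return {t₀ : ℝ} (hneg : v t₀ < 0) :
    ∃ t₁ t₂, t₁ ≤ t₀ ∧ t₀ ≤ t₂ ∧ t₂ ≤ t₁ + T ∧ v t₁ = 0 ∧ ψ t₂ = ψ t₁ := by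
  have hback : ψ t₀ = ψ (t₀ - T) + 2 * π := by simpa using W.running (t₀ - T)
  obtain ⟨t₁, ht₁, hrest, hψ₀₁⟩ := exists_critical_of_lt_of_deriv_neg W.hasDerivAt_phase
    (sub_lt_self t₀ W.period_pos) (by linarith [pi_pos]) hneg
  obtain ⟨t₂, ht₂, hψ₂₁⟩ := intermediate_value_Icc (by linarith [ht₁.1] : t₀ ≤ t₁ + T)
    (continuous_of_forall_hasDerivAt W.hasDerivAt_phase).continuousOn
    ⟨hψ₀₁, by linarith [W.running t₁, pi_pos]⟩
  exact ⟨t₁, t₂, ht₁.2.le, ht₂.1, ht₂.2, hrest, hψ₂₁⟩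

-- Swinging back from rest to speed `v t₀` dissipates at least `(-v t₀) ^ 3 / (3 L)`, yet the
-- wave regains the phase of the rest point within one period, with no less energy than before.
theorem neg_speed_pow_three_le (hβ : 0 < β) (hL : ∀ t, |pendulumAccel β J ψ v t| ≤ L)
    (hP : 0 ≤ P) (hJ : ∀ t, v t * (J t - J₀) ≤ P) (t₀ : ℝ) :
    (-v t₀) ^ 3 ≤ 3 * L * P * T := by
  have hL₀ : 0 ≤ L := (abs_nonneg _).trans (hL 0)
  have hT := W.period_pos
  obtain hnonneg | hneg := le_or_gt 0 (v t₀)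
  · exact (Odd.pow_nonpos (by decide) (neg_nonpos.2 hnonneg)).trans (by positivity)
  obtain ⟨t₁, t₂, h₁₀, h₀₂, h₂₁, hrest, hreturn⟩ := W.exists_rest_and_return hneg
  have hregain : pendulumEnergy β J₀ (ψ t₁) (v t₁) ≤ pendulumEnergy β J₀ (ψ t₂) (v t₂) := by
    have hkinetic : 0 ≤ β * v t₂ ^ 2 / 2 := by positivity
    simp only [pendulumEnergy, hreturn, hrest]
    linarith
  have hswing := W.energy_sub_sub_speed_pow_three_le hβ.ne' hL hJ h₁₀
  have hforward := mul_le_mul_of_nonneg_left (W.energy_sub_le hβ.ne' hJ h₀₂)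
    (by positivity : 0 ≤ 3 * L)
  have htotal := mul_le_mul_of_nonneg_left hregain (by positivity : 0 ≤ 3 * L)
  rw [hrest] at hswing htotal
  calc (-v t₀) ^ 3 ≤ 3 * L * P * (t₂ - t₁) := by linarith
    _ ≤ 3 * L * P * T := by gcongr; linarith

theorem speed_sq_le (hβ : 0 < β) (hJ : ∀ t, |J t - J₀| ≤ ε) {s t : ℝ} (hst : s ≤ t) :
    v t ^ 2 ≤ (v s ^ 2 + (J₀ - sin (ψ s)) ^ 2 + ε ^ 2) * exp ((1 + 1 / β) * (t - s)) := by
  have hderiv (x : ℝ) :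
      HasDerivAt (fun x => v x ^ 2 + (J₀ - sin (ψ x)) ^ 2 + ε ^ 2)
        (2 * v x * pendulumAccel β J ψ v x - 2 * (J₀ - sin (ψ x)) * (cos (ψ x) * v x)) x := by
    simpa [sub_eq_add_neg] using (((W.hasDerivAt_speed x).fun_pow 2).fun_add
      (((W.hasDerivAt_phase x).sin.const_sub J₀).fun_pow 2)).add_const (ε ^ 2)
  have hbound (x : ℝ) :
      2 * v x * pendulumAccel β J ψ v x - 2 * (J₀ - sin (ψ x)) * (cos (ψ x) * v x) ≤
        (1 + 1 / β) * (v x ^ 2 + (J₀ - sin (ψ x)) ^ 2 + ε ^ 2) := by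
    set g := J₀ - sin (ψ x) with hg
    have hdev : (J x - J₀) ^ 2 ≤ ε ^ 2 := sq_le_sq.2 ((hJ x).trans (le_abs_self ε))
    have hkinetic : 2 * v x * pendulumAccel β J ψ v x ≤ (v x ^ 2 + g ^ 2 + ε ^ 2) / β := by
      have hsplit : J x - v x - sin (ψ x) = g + (J x - J₀) - v x := by rw [hg]; ring
      rw [pendulumAccel, mul_div_assoc', hsplit]
      gcongr
      linarith [sq_nonneg (v x - g), sq_nonneg (v x - (J x - J₀)), sq_nonneg (v x)]
    have hforce : -(2 * g * (cos (ψ x) * v x)) ≤ v x ^ 2 + g ^ 2 := by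
      have hcos := mul_le_mul_of_nonneg_right (cos_sq_le_one (ψ x)) (sq_nonneg (v x))
      linarith [sq_nonneg (g + cos (ψ x) * v x)]
    calc _ ≤ (v x ^ 2 + g ^ 2 + ε ^ 2) / β + (v x ^ 2 + g ^ 2 + ε ^ 2) := by
          linarith [sq_nonneg ε]
      _ = (1 + 1 / β) * (v x ^ 2 + g ^ 2 + ε ^ 2) := by ring
  refine le_trans ?_ (le_mul_exp_of_deriv_le_mul hderiv hbound hst)
  linarith [sq_nonneg (J₀ - sin (ψ t)), sq_nonneg ε]

theorem mean_speed_sq_le_of_accel_eq_zero (hβ : 0 < β) {b t₀ : ℝ} (hJ : ∀ t, |J t - J₀| ≤ b)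
    (hcrit : pendulumAccel β J ψ v t₀ = 0) (hslow : |v t₀| ≤ b) :
    (2 * π / T) ^ 2 ≤ 6 * b ^ 2 * exp ((1 + 1 / β) * T) := by
  obtain ⟨z, hz, hmean⟩ := W.exists_speed_eq_mean t₀
  have hinit : v t₀ ^ 2 + (J₀ - sin (ψ t₀)) ^ 2 + b ^ 2 ≤ 6 * b ^ 2 := by
    have hspeed : v t₀ ^ 2 ≤ b ^ 2 := sq_le_sq.2 (hslow.trans (le_abs_self b))
    have hdev : (J t₀ - J₀) ^ 2 ≤ b ^ 2 := sq_le_sq.2 ((hJ t₀).trans (le_abs_self b))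
    have hforce : J₀ - sin (ψ t₀) = v t₀ - (J t₀ - J₀) := by
      linarith [speed_eq_of_pendulumAccel_eq_zero hβ.ne' hcrit]
    rw [hforce]
    linarith [sq_nonneg (v t₀ + (J t₀ - J₀))]
  calc (2 * π / T) ^ 2
      ≤ (v t₀ ^ 2 + (J₀ - sin (ψ t₀)) ^ 2 + b ^ 2) * exp ((1 + 1 / β) * (z - t₀)) :=
        hmean ▸ W.speed_sq_le hβ hJ hz.1.le
    _ ≤ 6 * b ^ 2 * exp ((1 + 1 / β) * T) := by
        gcongr
        linarith [hz.2]

end IsPendulumWave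

theorem IsBoundedPendulumWave.le_speed {β a ε M L T₀ J₀ T : ℝ} {J ψ v : ℝ → ℝ}
    (W : IsBoundedPendulumWave β (-M) M L T₀ J ψ v T) (hβ : 0 < β) (ha : 0 ≤ a)
    (hmean : 6 * a ^ 2 * exp ((1 + 1 / β) * T₀) < (2 * π / T₀) ^ 2)
    (hεa : ε ≤ a) (hε : 3 * L * (M * ε) * T₀ < a ^ 3) (hJ : ∀ t, |J t - J₀| ≤ ε) (t : ℝ) :
    a ≤ v t := by
  have hT := W.period_pos
  have hT₀ : 0 < T₀ := hT.trans_le W.period_le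
  have hL₀ : 0 ≤ L := (abs_nonneg _).trans (W.abs_accel_le 0)
  have hM₀ : 0 ≤ M := (abs_nonneg _).trans (abs_le.2 (W.speed_mem 0))
  have hε₀ : 0 ≤ ε := (abs_nonneg _).trans (hJ 0)
  have hpower (t : ℝ) : v t * (J t - J₀) ≤ M * ε := by
    refine (le_abs_self _).trans ?_
    rw [abs_mul]
    exact mul_le_mul (abs_le.2 (W.speed_mem t)) (hJ t) (abs_nonneg _) hM₀
  obtain ⟨t₀, hcrit, hmin⟩ :=
    exists_critical_forall_le hT.ne' W.periodic_speed W.hasDerivAt_speed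
  refine le_trans ?_ (hmin t)
  by_contra! hslow
  have hnotback : -v t₀ < a := by
    refine lt_of_pow_lt_pow_left₀ 3 ha (lt_of_le_of_lt ?_ hε)
    refine (W.neg_speed_pow_three_le hβ W.abs_accel_le (by positivity) hpower t₀).trans ?_
    gcongr
    exact W.period_le
  refine hmean.not_ge ?_
  calc (2 * π / T₀) ^ 2 ≤ (2 * π / T) ^ 2 := by gcongr; exact W.period_le
    _ ≤ 6 * a ^ 2 * exp ((1 + 1 / β) * T) :=
        W.mean_speed_sq_le_of_accel_eq_zero hβ (fun t => (hJ t).trans hεa) hcrit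
          (abs_le.2 ⟨by linarith, hslow.le⟩)
    _ ≤ 6 * a ^ 2 * exp ((1 + 1 / β) * T₀) := by gcongr; exact W.period_le

theorem IsBoundedPendulumWave.abs_speed_le {β a M L T₀ T : ℝ} {J ψ v : ℝ → ℝ}
    (W : IsBoundedPendulumWave β a M L T₀ J ψ v T) (ha : 0 ≤ a) (t : ℝ) : |v t| ≤ M :=
  (abs_of_nonneg (ha.trans (W.speed_mem t).1)).trans_le (W.speed_mem t).2

theorem exists_forall_le_speed {β M L T₀ : ℝ} (hβ : 0 < β) (hM : 0 < M) (hL : 0 < L)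
    (hT₀ : 0 < T₀) :
    ∃ a > 0, ∃ ε > 0, ∀ {J ψ v : ℝ → ℝ} {T J₀ : ℝ},
      IsBoundedPendulumWave β (-M) M L T₀ J ψ v T → (∀ t, |J t - J₀| ≤ ε) → ∀ t, a ≤ v t := by
  set X := exp ((1 + 1 / β) * T₀)
  set a := √((2 * π / T₀) ^ 2 / (7 * X)) with ha_def
  have ha : 0 < a := by positivity
  have hmean : 6 * a ^ 2 * X < (2 * π / T₀) ^ 2 := by
    have hc : 0 < (2 * π / T₀) ^ 2 := by positivity
    have hsq : a ^ 2 * (7 * X) = (2 * π / T₀) ^ 2 := by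
      rw [ha_def, sq_sqrt (by positivity), div_mul_cancel₀ _ (by positivity)]
    linarith
  set ε := min a (a ^ 3 / (6 * L * M * T₀))
  have hε : 0 < ε := by positivity
  have hεa : 3 * L * (M * ε) * T₀ < a ^ 3 := by
    have hmin : ε * (6 * L * M * T₀) ≤ a ^ 3 :=
      (le_div_iff₀ (by positivity)).1 (min_le_right _ _)
    linarith [pow_pos ha 3]
  exact ⟨a, ha, ε, hε, fun W hJ => W.le_speed hβ ha.le hmean (min_le_left _ _) hεa hJ⟩

/-- The change of time `τ` along which the waveform `ψ₂` of period `T₂` runs through the same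
phases as the waveform `ψ₁` of period `T₁`. -/
structure IsPhaseMatch (ψ₁ v₁ : ℝ → ℝ) (T₁ : ℝ) (ψ₂ v₂ : ℝ → ℝ) (T₂ : ℝ) (τ : ℝ → ℝ) : Prop where
  phase_eq (t : ℝ) : ψ₂ (τ t) = ψ₁ t
  hasDerivAt (t : ℝ) : HasDerivAt τ (v₁ t / v₂ (τ t)) t
  add_period (t : ℝ) : τ (t + T₁) = τ t + T₂

theorem exists_isPhaseMatch {ψ₁ v₁ ψ₂ v₂ : ℝ → ℝ} {T₁ T₂ a : ℝ} (ha : 0 < a)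
    (hψ₁ : ∀ t, HasDerivAt ψ₁ (v₁ t) t) (hψ₂ : ∀ t, HasDerivAt ψ₂ (v₂ t) t)
    (hrun₁ : IsRunning ψ₁ T₁) (hrun₂ : IsRunning ψ₂ T₂) (hv₂ : ∀ t, a ≤ v₂ t) :
    ∃ τ, IsPhaseMatch ψ₁ v₁ T₁ ψ₂ v₂ T₂ τ := by
  have hmono : StrictMono ψ₂ := strictMono_of_hasDerivAt_pos hψ₂ fun t => ha.trans_le (hv₂ t)
  let e := hmono.orderIsoOfSurjective ψ₂ (surjective_of_le_deriv ha hψ₂ hv₂)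
  have he (x : ℝ) : ψ₂ (e.symm x) = x := e.apply_symm_apply x
  have he' (x : ℝ) : HasDerivAt e.symm (v₂ (e.symm x))⁻¹ x :=
    .of_local_left_inverse e.symm.continuous.continuousAt (hψ₂ _) (ha.trans_le (hv₂ _)).ne'
      (.of_forall he)
  refine ⟨fun t => e.symm (ψ₁ t), fun t => he _, fun t => ?_, fun t => hmono.injective ?_⟩
  · exact ((he' _).comp t (hψ₁ t)).congr_deriv (div_eq_inv_mul _ _).symm
  · rw [hrun₂, he, he, hrun₁]

/-- Factor by which a bound on the difference of the drives of two matched waves has to be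
multiplied in order to bound the deviation of their phase match from an affine map. -/
noncomputable def driftConst (a M T₀ : ℝ) : ℝ :=
  2 * T₀ * (M / a ^ 2)

/-- Factor by which a bound on the difference of the drives of two matched waves has to be
multiplied in order to bound the difference of their accelerations, compared along an affine
change of time; `Λ` is a Lipschitz constant of the second drive. -/
noncomputable def accelConst (β a M L Λ T₀ : ℝ) : ℝ :=
  (1 + Λ * driftConst a M T₀ + (M / a + L * driftConst a M T₀) + M * driftConst a M T₀) / β +
    L * (M / a ^ 2)

namespace IsPhaseMatch

variable {β a M L Λ T₀ μ T₁ T₂ : ℝ} {J₁ ψ₁ v₁ J₂ ψ₂ v₂ τ : ℝ → ℝ}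

-- The squared speed as a function of the phase `x` obeys `(v ^ 2)' = 2 (J - v - sin x) / β`, so
-- the sine cancels when two waves are compared at equal phase.
theorem hasDerivAt_speed_sq_sub (hτ : IsPhaseMatch ψ₁ v₁ T₁ ψ₂ v₂ T₂ τ)
    (W₁ : IsPendulumWave β J₁ ψ₁ v₁ T₁) (W₂ : IsPendulumWave β J₂ ψ₂ v₂ T₂) {t : ℝ}
    (hv₂ : v₂ (τ t) ≠ 0) :
    HasDerivAt (fun s => v₁ s ^ 2 - v₂ (τ s) ^ 2)
      (2 * v₁ t / β * ((J₁ t - J₂ (τ t)) - (v₁ t - v₂ (τ t)))) t := by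
  refine (((W₁.hasDerivAt_speed t).fun_pow 2).fun_sub
    (((W₂.hasDerivAt_speed (τ t)).comp t (hτ.hasDerivAt t)).fun_pow 2)).congr_deriv ?_
  simp only [pendulumAccel, hτ.phase_eq, Function.comp_apply]
  field_simp
  ring

theorem periodic_speed_sq_sub (hτ : IsPhaseMatch ψ₁ v₁ T₁ ψ₂ v₂ T₂ τ)
    (hv₁ : Function.Periodic v₁ T₁) (hv₂ : Function.Periodic v₂ T₂) :
    Function.Periodic (fun s => v₁ s ^ 2 - v₂ (τ s) ^ 2) T₁ := fun t => by
  simp only [hτ.add_period, hv₁ t, hv₂ (τ t)]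

variable (hτ : IsPhaseMatch ψ₁ v₁ T₁ ψ₂ v₂ T₂ τ)
  (W₁ : IsBoundedPendulumWave β a M L T₀ J₁ ψ₁ v₁ T₁)
  (W₂ : IsBoundedPendulumWave β a M L T₀ J₂ ψ₂ v₂ T₂) (hβ : 0 < β) (ha : 0 < a)
include hτ W₁ W₂ hβ ha

theorem period_lt_of_drive_lt (hJ : ∀ t, J₂ (τ t) < J₁ t) : T₁ < T₂ := by
  have hv₁ (t : ℝ) : 0 < v₁ t := ha.trans_le (W₁.speed_mem t).1
  have hv₂ (t : ℝ) : 0 < v₂ t := ha.trans_le (W₂.speed_mem t).1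
  obtain ⟨x, hcrit, hmin⟩ := exists_critical_forall_le W₁.period_pos.ne'
    (hτ.periodic_speed_sq_sub W₁.periodic_speed W₂.periodic_speed)
    fun t => hτ.hasDerivAt_speed_sq_sub W₁.1 W₂.1 (hv₂ (τ t)).ne'
  have hfaster_at_min : v₂ (τ x) < v₁ x := by
    have hpos : 2 * v₁ x / β ≠ 0 := (div_pos (mul_pos two_pos (hv₁ x)) hβ).ne'
    linarith [(mul_eq_zero.1 hcrit).resolve_left hpos, hJ x]
  have hfaster (t : ℝ) : v₂ (τ t) < v₁ t := by
    have hsq : v₂ (τ x) ^ 2 < v₁ x ^ 2 := pow_lt_pow_left₀ hfaster_at_min (hv₂ _).le two_ne_zero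
    exact lt_of_pow_lt_pow_left₀ 2 (hv₁ t).le (by linarith [hmin t])
  obtain ⟨z, -, hslope⟩ :=
    exists_sub_eq_mul_sub hτ.hasDerivAt (lt_add_of_pos_right 0 W₁.period_pos)
  have hstretch := (lt_mul_iff_one_lt_left W₁.period_pos).2 ((one_lt_div (hv₂ _)).2 (hfaster z))
  rw [hτ.add_period] at hslope
  linarith

section DriveBound

variable (hμ : ∀ t, |J₁ t - J₂ (τ t)| ≤ μ)
include hμ

theorem abs_speed_sq_sub_le (t : ℝ) : |v₁ t ^ 2 - v₂ (τ t) ^ 2| ≤ 2 * M * μ := by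
  have hv₁ (t : ℝ) : 0 < v₁ t := ha.trans_le (W₁.speed_mem t).1
  have hv₂ (t : ℝ) : 0 < v₂ t := ha.trans_le (W₂.speed_mem t).1
  have hM : 0 < M := (hv₁ 0).trans_le (W₁.speed_mem 0).2
  refine abs_le.2 (mem_Icc_of_critical_mem_Icc W₁.period_pos.ne'
    (hτ.periodic_speed_sq_sub W₁.periodic_speed W₂.periodic_speed)
    (fun t => hτ.hasDerivAt_speed_sq_sub W₁.1 W₂.1 (hv₂ (τ t)).ne') (fun x hx => ?_) t)
  have hpos : 2 * v₁ x / β ≠ 0 := (div_pos (mul_pos two_pos (hv₁ x)) hβ).ne'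
  have hspeed : v₁ x - v₂ (τ x) = J₁ x - J₂ (τ x) := by
    linarith [(mul_eq_zero.1 hx).resolve_left hpos]
  rw [Set.mem_Icc, ← abs_le, sq_sub_sq, hspeed, abs_mul, abs_of_pos (add_pos (hv₁ _) (hv₂ _))]
  exact mul_le_mul (by linarith [(W₁.speed_mem x).2, (W₂.speed_mem (τ x)).2]) (hμ x)
    (abs_nonneg _) (by positivity)

theorem abs_speed_sub_le (t : ℝ) : |v₁ t - v₂ (τ t)| ≤ M / a * μ := by
  have hsq := hτ.abs_speed_sq_sub_le W₁ W₂ hβ ha hμ t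
  have hsum : 2 * a ≤ v₁ t + v₂ (τ t) := by
    linarith [(W₁.speed_mem t).1, (W₂.speed_mem (τ t)).1]
  rw [sq_sub_sq, abs_mul, abs_of_pos (by linarith)] at hsq
  rw [div_mul_eq_mul_div, le_div_iff₀ ha]
  linarith [mul_le_mul_of_nonneg_right hsum (abs_nonneg (v₁ t - v₂ (τ t)))]

theorem abs_deriv_sub_one_le (t : ℝ) : |v₁ t / v₂ (τ t) - 1| ≤ M / a ^ 2 * μ := by
  have hv₂ : 0 < v₂ (τ t) := ha.trans_le (W₂.speed_mem _).1
  calc |v₁ t / v₂ (τ t) - 1| = |v₁ t - v₂ (τ t)| / v₂ (τ t) := by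
        rw [div_sub_one hv₂.ne', abs_div, abs_of_pos hv₂]
    _ ≤ M / a * μ / a := div_le_div₀ ((abs_nonneg _).trans (hτ.abs_speed_sub_le W₁ W₂ hβ ha hμ t))
        (hτ.abs_speed_sub_le W₁ W₂ hβ ha hμ t) ha (W₂.speed_mem _).1
    _ = M / a ^ 2 * μ := by ring

theorem abs_period_div_sub_one_le : |T₂ / T₁ - 1| ≤ M / a ^ 2 * μ := by
  obtain ⟨z, -, hslope⟩ :=
    exists_sub_eq_mul_sub hτ.hasDerivAt (lt_add_of_pos_right 0 W₁.period_pos)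
  rw [hτ.add_period, add_sub_cancel_left, zero_add, sub_zero] at hslope
  rw [hslope, mul_div_cancel_right₀ _ W₁.period_pos.ne']
  exact hτ.abs_deriv_sub_one_le W₁ W₂ hβ ha hμ z

theorem abs_sub_affine_le (t : ℝ) :
    |τ t - (T₂ / T₁ * t + τ 0)| ≤ driftConst a M T₀ * μ := by
  have hderiv (s : ℝ) :
      HasDerivAt (fun s => τ s - (T₂ / T₁ * s + τ 0)) (v₁ s / v₂ (τ s) - T₂ / T₁) s := by
    simpa using (hτ.hasDerivAt s).fun_sub
      (((hasDerivAt_id s).const_mul (T₂ / T₁)).add_const (τ 0))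
  have hslope (s : ℝ) : |v₁ s / v₂ (τ s) - T₂ / T₁| ≤ 2 * (M / a ^ 2 * μ) := by
    have hratio := hτ.abs_period_div_sub_one_le W₁ W₂ hβ ha hμ
    rw [abs_sub_comm] at hratio
    linarith [abs_sub_le (v₁ s / v₂ (τ s)) 1 (T₂ / T₁), hτ.abs_deriv_sub_one_le W₁ W₂ hβ ha hμ s]
  have hper : Function.Periodic (fun s => τ s - (T₂ / T₁ * s + τ 0)) T₁ := fun s => by
    simp only [hτ.add_period, mul_add, div_mul_cancel₀ _ W₁.period_pos.ne']
    ring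
  obtain ⟨s, hs, heq⟩ := hper.exists_mem_Ico₀ W₁.period_pos t
  have hlip := abs_sub_le_mul_abs_sub hderiv hslope s 0
  have hC : 0 ≤ 2 * (M / a ^ 2 * μ) := (abs_nonneg _).trans (hslope 0)
  calc |τ t - (T₂ / T₁ * t + τ 0)| = |τ s - (T₂ / T₁ * s + τ 0)| := congrArg _ heq
    _ ≤ 2 * (M / a ^ 2 * μ) * s := by simpa [abs_of_nonneg hs.1] using hlip
    _ ≤ 2 * (M / a ^ 2 * μ) * T₀ := by gcongr; exact hs.2.le.trans W₁.period_le
    _ = driftConst a M T₀ * μ := by rw [driftConst]; ring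

theorem abs_accel_sub_affine_le (hΛ : ∀ x y, |J₂ x - J₂ y| ≤ Λ * |x - y|) (t : ℝ) :
    |pendulumAccel β J₁ ψ₁ v₁ t - pendulumAccel β J₂ ψ₂ v₂ (T₂ / T₁ * t + τ 0)| ≤
      (1 + Λ * driftConst a M T₀ + (M / a + L * driftConst a M T₀) +
        M * driftConst a M T₀) / β * μ := by
  set D := driftConst a M T₀
  set ρ := T₂ / T₁ * t + τ 0
  have hL : 0 ≤ L := (abs_nonneg _).trans (W₁.abs_accel_le 0)
  have hM : 0 < M := ha.trans_le ((W₁.speed_mem 0).1.trans (W₁.speed_mem 0).2)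
  have hΛ₀ : 0 ≤ Λ := by simpa using (abs_nonneg _).trans (hΛ 1 0)
  have hdrift : |τ t - ρ| ≤ D * μ := hτ.abs_sub_affine_le W₁ W₂ hβ ha hμ t
  have hdrive : |J₁ t - J₂ ρ| ≤ μ + Λ * (D * μ) :=
    (abs_sub_le _ (J₂ (τ t)) _).trans (add_le_add (hμ t) ((hΛ _ _).trans (by gcongr)))
  have hspeed : |v₁ t - v₂ ρ| ≤ M / a * μ + L * (D * μ) :=
    (abs_sub_le _ (v₂ (τ t)) _).trans (add_le_add (hτ.abs_speed_sub_le W₁ W₂ hβ ha hμ t)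
      ((abs_sub_le_mul_abs_sub W₂.hasDerivAt_speed W₂.abs_accel_le _ _).trans (by gcongr)))
  have hsin : |sin (ψ₁ t) - sin (ψ₂ ρ)| ≤ M * (D * μ) := by
    rw [← hτ.phase_eq]
    exact (abs_sin_sub_sin_le _ _).trans ((abs_sub_le_mul_abs_sub W₂.hasDerivAt_phase
      (W₂.abs_speed_le ha.le) _ _).trans (by gcongr))
  rw [pendulumAccel, pendulumAccel, ← sub_div, abs_div, abs_of_pos hβ, div_mul_eq_mul_div]
  gcongr
  rw [abs_le] at hdrive hspeed hsin ⊢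
  constructor <;> linarith

theorem abs_accel_sub_affine_mul_le (hΛ : ∀ x y, |J₂ x - J₂ y| ≤ Λ * |x - y|) (t : ℝ) :
    |pendulumAccel β J₁ ψ₁ v₁ t -
        pendulumAccel β J₂ ψ₂ v₂ (T₂ / T₁ * t + τ 0) * (T₂ / T₁)| ≤
      accelConst β a M L Λ T₀ * μ := by
  set A₂ := pendulumAccel β J₂ ψ₂ v₂ (T₂ / T₁ * t + τ 0)
  have hratio : |A₂ * (1 - T₂ / T₁)| ≤ L * (M / a ^ 2 * μ) := by
    rw [abs_mul, abs_sub_comm]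
    exact mul_le_mul (W₂.abs_accel_le _) (hτ.abs_period_div_sub_one_le W₁ W₂ hβ ha hμ)
      (abs_nonneg _) ((abs_nonneg _).trans (W₁.abs_accel_le 0))
  calc |pendulumAccel β J₁ ψ₁ v₁ t - A₂ * (T₂ / T₁)|
      = |(pendulumAccel β J₁ ψ₁ v₁ t - A₂) + A₂ * (1 - T₂ / T₁)| := by ring_nf
    _ ≤ _ := (abs_add_le _ _).trans
        (add_le_add (hτ.abs_accel_sub_affine_le W₁ W₂ hβ ha hμ hΛ t) hratio)
    _ = accelConst β a M L Λ T₀ * μ := by rw [accelConst]; ring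

end DriveBound

end IsPhaseMatch

/-- The deviation of the collective term from its mean `2π / T` when all junctions carry a running
waveform of period `T` with speed `v`. -/
noncomputable def ripple (N : ℕ) (T : ℝ) (v : ℝ → ℝ) (t : ℝ) : ℝ :=
  shiftAvg N T v t - 2 * π / T

theorem abs_ripple_sub_ripple_affine_le {N : ℕ} (hN : N ≠ 0) {T₁ T₂ b K : ℝ}
    {ψ₁ v₁ a₁ ψ₂ v₂ a₂ : ℝ → ℝ} (hT₁ : 0 < T₁) (hT₂ : 0 < T₂)
    (hrun₁ : IsRunning ψ₁ T₁) (hrun₂ : IsRunning ψ₂ T₂)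
    (hψ₁ : ∀ t, HasDerivAt ψ₁ (v₁ t) t) (hψ₂ : ∀ t, HasDerivAt ψ₂ (v₂ t) t)
    (hv₁ : ∀ t, HasDerivAt v₁ (a₁ t) t) (hv₂ : ∀ t, HasDerivAt v₂ (a₂ t) t)
    (hK : ∀ t, |a₁ t - a₂ (T₂ / T₁ * t + b) * (T₂ / T₁)| ≤ K) (t : ℝ) :
    |ripple N T₁ v₁ t - ripple N T₂ v₂ (T₂ / T₁ * t + b)| ≤ K * (T₁ / N) := by
  set r := T₂ / T₁
  have hrT : r * T₁ = T₂ := div_mul_cancel₀ _ hT₁.ne'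
  have hr₀ : r ≠ 0 := (div_pos hT₂ hT₁).ne'
  have haffine (s : ℝ) : HasDerivAt (fun s => r * s + b) r s := by
    simpa using ((hasDerivAt_id s).const_mul r).add_const b
  have hphase (s : ℝ) :
      HasDerivAt (fun s => ψ₁ s - ψ₂ (r * s + b) / r) (v₁ s - v₂ (r * s + b)) s :=
    ((hψ₁ s).sub (((hψ₂ _).comp s (haffine s)).div_const r)).congr_deriv
      (by rw [mul_div_cancel_right₀ _ hr₀])
  have hspeed (s : ℝ) :
      HasDerivAt (fun s => v₁ s - v₂ (r * s + b)) (a₁ s - a₂ (r * s + b) * r) s :=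
    (hv₁ s).sub ((hv₂ _).comp s (haffine s))
  have hgain (s : ℝ) : ψ₁ (s + T₁) - ψ₂ (r * (s + T₁) + b) / r =
      ψ₁ s - ψ₂ (r * s + b) / r + (2 * π - 2 * π / r) := by
    rw [show r * (s + T₁) + b = r * s + b + T₂ by rw [← hrT]; ring, hrun₁, hrun₂]
    ring
  have hmean : (2 * π - 2 * π / r) / T₁ = 2 * π / T₁ - 2 * π / T₂ := by
    rw [← hrT, sub_div, div_div]
  have hclose := abs_shiftAvg_sub_div_le hN hT₁ hphase hspeed hgain hK t
  rwa [shiftAvg_sub, shiftAvg_comp_affine, hrT, hmean, ← sub_sub_sub_comm] at hclose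

/-- The drive `I - (1/N) ∑ j, φ_j'` which a single junction of the array feels when all junctions
carry the waveform with speed `v`. -/
noncomputable def arrayDrive (N : ℕ) (I T : ℝ) (v : ℝ → ℝ) (t : ℝ) : ℝ :=
  I - shiftAvg N T v t

/-- A discrete rotating wave as a pendulum wave that generates its own drive, together with the
bounds of `IsBoundedPendulumWave`. -/
abbrev IsBoundedArrayWave (N : ℕ) (β I a M L T₀ : ℝ) (ψ v : ℝ → ℝ) (T : ℝ) : Prop :=
  IsBoundedPendulumWave β a M L T₀ (arrayDrive N I T v) ψ v T

theorem IsDRWRes.isPendulumWave {N : ℕ} (hN : N ≠ 0) {β I T : ℝ} (hβ : β ≠ 0) {ψ : ℝ → ℝ}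
    (h : IsDRWRes N β I ψ T) : IsPendulumWave β (arrayDrive N I T (deriv ψ)) ψ (deriv ψ) T := by
  obtain ⟨hT, hψ, hrun, heq⟩ := h
  have hψ' : ContDiff ℝ 1 (deriv ψ) := (contDiff_succ_iff_deriv.1 hψ).2.2
  refine ⟨hT, hrun, fun t => (hψ.differentiable two_ne_zero t).hasDerivAt, fun t => ?_⟩
  refine (hψ'.differentiable one_ne_zero t).hasDerivAt.congr_deriv ?_
  have heq₀ := heq ⟨0, Nat.pos_of_ne_zero hN⟩ t
  simp only [CharP.cast_eq_zero, zero_mul, zero_div, sub_zero, deriv_comp_sub_const] at heq₀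
  rw [pendulumAccel, eq_div_iff hβ, arrayDrive, shiftAvg]
  linarith

section ArrayWave

variable {N : ℕ} {β I T : ℝ} {ψ v : ℝ → ℝ}

theorem hasDerivAt_arrayDrive {v' : ℝ → ℝ} (hv : ∀ t, HasDerivAt v (v' t) t) (t : ℝ) :
    HasDerivAt (arrayDrive N I T v) (-shiftAvg N T v' t) t :=
  (hasDerivAt_shiftAvg hv t).const_sub I

-- The collective term is invariant under a shift by `T / N`, so averaging the equation over the
-- junctions reproduces it.
theorem shiftAvg_accel (hN : N ≠ 0) (hv : Function.Periodic v T) (t : ℝ) :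
    shiftAvg N T (pendulumAccel β (arrayDrive N I T v) ψ v) t =
      (I - 2 * shiftAvg N T v t - shiftAvg N T (fun s => sin (ψ s)) t) / β := by
  have hper : Function.Periodic (arrayDrive N I T v) (T / N) := fun s => by
    rw [arrayDrive, arrayDrive, periodic_shiftAvg hN hv]
  calc _ = (shiftAvg N T (arrayDrive N I T v) t - shiftAvg N T v t -
        shiftAvg N T (fun s => sin (ψ s)) t) / β := by
          rw [← shiftAvg_sub, ← shiftAvg_sub, ← shiftAvg_div]
          rfl
    _ = _ := by rw [shiftAvg_eq_self hN hper, arrayDrive]; ring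

theorem IsPendulumWave.shiftAvg_speed_mem_Icc
    (W : IsPendulumWave β (arrayDrive N I T v) ψ v T) (hN : N ≠ 0) (hβ : β ≠ 0) (t : ℝ) :
    shiftAvg N T v t ∈ Set.Icc ((I - 1) / 2) ((I + 1) / 2) := by
  have hN' : (N : ℝ) ≠ 0 := Nat.cast_ne_zero.2 hN
  refine mem_Icc_of_critical_mem_Icc (div_ne_zero W.period_pos.ne' hN')
    (periodic_shiftAvg hN W.periodic_speed) (hasDerivAt_shiftAvg W.hasDerivAt_speed)
    (fun x hx => ?_) t
  rw [shiftAvg_accel hN W.periodic_speed, div_eq_zero_iff, or_iff_left hβ] at hx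
  have hsin := shiftAvg_mem_Icc (T := T) hN (fun s => sin_mem_Icc (ψ s)) x
  exact ⟨by linarith [hsin.2], by linarith [hsin.1]⟩

theorem IsPendulumWave.isBoundedArrayWave
    (W : IsPendulumWave β (arrayDrive N I T v) ψ v T) (hN : N ≠ 0) (hβ : 0 < β) (hI : 1 < I) :
    IsBoundedArrayWave N β I (-(I + 1)) (I + 1) (3 / β) (4 * π / (I - 1)) ψ v T := by
  have havg := W.shiftAvg_speed_mem_Icc hN hβ.ne'
  have hdrive (t : ℝ) : arrayDrive N I T v t ∈ Set.Icc ((I - 1) / 2) ((I + 1) / 2) :=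
    ⟨by rw [arrayDrive]; linarith [(havg t).2], by rw [arrayDrive]; linarith [(havg t).1]⟩
  refine ⟨W, fun t => ?_, fun t => ?_, ?_⟩
  · exact Set.Icc_subset_Icc (by linarith) (by linarith) (W.speed_mem_Icc hβ.ne' hdrive t)
  · exact (W.abs_accel_le_of_drive_mem_Icc hβ hdrive t).trans_eq (by ring)
  · obtain ⟨z, -, hz⟩ :=
      exists_shiftAvg_eq_div hN W.period_pos W.hasDerivAt_phase W.running 0
    have hmean := (havg z).1
    rw [hz, le_div_iff₀ W.period_pos] at hmean
    rw [le_div_iff₀ (sub_pos.2 hI)]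
    linarith

end ArrayWave

namespace IsBoundedArrayWave

variable {N : ℕ} {β I a M L T₀ T : ℝ} {ψ v : ℝ → ℝ}

theorem abs_ripple_le (W : IsBoundedArrayWave N β I a M L T₀ ψ v T)
    (hN : N ≠ 0) (t : ℝ) : |ripple N T v t| ≤ L * (T₀ / N) := by
  have hL : 0 ≤ L := (abs_nonneg _).trans (W.abs_accel_le 0)
  refine (abs_shiftAvg_sub_div_le hN W.period_pos W.hasDerivAt_phase W.hasDerivAt_speed
    W.running W.abs_accel_le t).trans ?_
  gcongr
  exact W.period_le

theorem abs_arrayDrive_sub_le (W : IsBoundedArrayWave N β I a M L T₀ ψ v T) (hN : N ≠ 0)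
    (x y : ℝ) : |arrayDrive N I T v x - arrayDrive N I T v y| ≤ L * |x - y| :=
  abs_sub_le_mul_abs_sub (hasDerivAt_arrayDrive W.hasDerivAt_speed)
    (fun t => (abs_neg _).trans_le (abs_shiftAvg_le hN W.abs_accel_le t)) x y

theorem abs_shiftAvg_accel_le (W : IsBoundedArrayWave N β I a M L T₀ ψ v T) (hN : N ≠ 0)
    (hβ : 0 < β) (ha : 0 ≤ a) (t : ℝ) :
    |shiftAvg N T (pendulumAccel β (arrayDrive N I T v) ψ v) t| ≤
      (2 * L + M) / β * (T₀ / N) := by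
  set A := pendulumAccel β (arrayDrive N I T v) ψ v
  have hjerk (s : ℝ) :
      HasDerivAt A ((-shiftAvg N T A s - A s - cos (ψ s) * v s) / β) s :=
    (((hasDerivAt_arrayDrive W.hasDerivAt_speed s).sub (W.hasDerivAt_speed s)).sub
      (W.hasDerivAt_phase s).sin).div_const β
  have hjerk_le (s : ℝ) :
      |(-shiftAvg N T A s - A s - cos (ψ s) * v s) / β| ≤ (2 * L + M) / β := by
    have havg := abs_le.1 (abs_shiftAvg_le (T := T) hN W.abs_accel_le s)
    have haccel := abs_le.1 (W.abs_accel_le s)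
    have hcos : |cos (ψ s) * v s| ≤ M := by
      rw [abs_mul]
      exact (mul_le_of_le_one_left (abs_nonneg _) (abs_cos_le_one _)).trans (W.abs_speed_le ha s)
    rw [abs_div, abs_of_pos hβ]
    gcongr
    rw [abs_le] at hcos ⊢
    constructor <;> linarith
  have hclose := abs_shiftAvg_sub_div_le hN W.period_pos W.hasDerivAt_speed hjerk (R := 0)
    (by simpa using W.periodic_speed) hjerk_le t
  rw [zero_div, sub_zero] at hclose
  refine hclose.trans (mul_le_mul_of_nonneg_left ?_ ((abs_nonneg _).trans (hjerk_le 0)))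
  gcongr
  exact W.period_le

theorem abs_ripple_sub_le (W : IsBoundedArrayWave N β I a M L T₀ ψ v T) (hN : N ≠ 0)
    (hβ : 0 < β) (ha : 0 ≤ a) (x y : ℝ) :
    |ripple N T v x - ripple N T v y| ≤ (2 * L + M) / β * (T₀ / N) * |x - y| := by
  rw [ripple, ripple, sub_sub_sub_cancel_right]
  exact abs_sub_le_mul_abs_sub (hasDerivAt_shiftAvg W.hasDerivAt_speed)
    (W.abs_shiftAvg_accel_le hN hβ ha) x y

end IsBoundedArrayWave

/-- Factor which, divided by `N`, turns a bound on the difference of the drives of two matched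
array waves into a bound on the difference of their ripples. -/
noncomputable def contractionConst (β a M L T₀ : ℝ) : ℝ :=
  (accelConst β a M L L T₀ + (2 * L + M) / β * driftConst a M T₀) * T₀

theorem arrayDrive_sub_arrayDrive (N : ℕ) (I T₁ T₂ : ℝ) (v₁ v₂ : ℝ → ℝ) (s t : ℝ) :
    arrayDrive N I T₁ v₁ s - arrayDrive N I T₂ v₂ t =
      (2 * π / T₂ - 2 * π / T₁) - (ripple N T₁ v₁ s - ripple N T₂ v₂ t) := by
  simp only [arrayDrive, ripple]
  ring

section Uniqueness

variable {N : ℕ} {β I a M L T₀ T₁ T₂ : ℝ} {ψ₁ v₁ ψ₂ v₂ τ : ℝ → ℝ}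
  (hτ : IsPhaseMatch ψ₁ v₁ T₁ ψ₂ v₂ T₂ τ)
  (W₁ : IsBoundedArrayWave N β I a M L T₀ ψ₁ v₁ T₁)
  (W₂ : IsBoundedArrayWave N β I a M L T₀ ψ₂ v₂ T₂) (hN : N ≠ 0) (hβ : 0 < β) (ha : 0 < a)
  (hNC : 3 * contractionConst β a M L T₀ ≤ N)

include W₁ W₂ hN hβ ha

namespace IsPhaseMatch

include hτ

theorem abs_ripple_sub_le_of_drive {μ : ℝ}
    (hμ : ∀ t, |arrayDrive N I T₁ v₁ t - arrayDrive N I T₂ v₂ (τ t)| ≤ μ) (t : ℝ) :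
    |ripple N T₁ v₁ t - ripple N T₂ v₂ (τ t)| ≤ contractionConst β a M L T₀ / N * μ := by
  have haccel := hτ.abs_accel_sub_affine_mul_le W₁ W₂ hβ ha hμ (W₂.abs_arrayDrive_sub_le hN)
  have hdrift := hτ.abs_sub_affine_le W₁ W₂ hβ ha hμ t
  rw [abs_sub_comm] at hdrift
  set ρ := T₂ / T₁ * t + τ 0
  have hL : 0 ≤ L := (abs_nonneg _).trans (W₁.abs_accel_le 0)
  have hM : 0 ≤ M := (abs_nonneg _).trans (W₁.abs_speed_le ha.le 0)
  have hT₀ : 0 ≤ T₀ := W₁.period_pos.le.trans W₁.period_le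
  have haffine : |ripple N T₁ v₁ t - ripple N T₂ v₂ ρ| ≤
      accelConst β a M L L T₀ * μ * (T₀ / N) :=
    (abs_ripple_sub_ripple_affine_le hN W₁.period_pos W₂.period_pos W₁.running W₂.running
      W₁.hasDerivAt_phase W₂.hasDerivAt_phase W₁.hasDerivAt_speed W₂.hasDerivAt_speed
      haccel t).trans (mul_le_mul_of_nonneg_left
        (div_le_div_of_nonneg_right W₁.period_le N.cast_nonneg)
        ((abs_nonneg _).trans (haccel 0)))
  have hmove : |ripple N T₂ v₂ ρ - ripple N T₂ v₂ (τ t)| ≤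
      (2 * L + M) / β * (T₀ / N) * (driftConst a M T₀ * μ) :=
    (W₂.abs_ripple_sub_le hN hβ ha.le _ _).trans (by gcongr)
  calc |ripple N T₁ v₁ t - ripple N T₂ v₂ (τ t)|
      ≤ accelConst β a M L L T₀ * μ * (T₀ / N) +
          (2 * L + M) / β * (T₀ / N) * (driftConst a M T₀ * μ) :=
        (abs_sub_le _ _ _).trans (add_le_add haffine hmove)
    _ = contractionConst β a M L T₀ / N * μ := by rw [contractionConst]; ring

include hNC

theorem abs_ripple_sub_le_half (t : ℝ) :
    |ripple N T₁ v₁ t - ripple N T₂ v₂ (τ t)| ≤ |2 * π / T₂ - 2 * π / T₁| / 2 := by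
  have hN' : (0 : ℝ) < N := by positivity
  have hbdd : BddAbove (Set.range fun t => |ripple N T₁ v₁ t - ripple N T₂ v₂ (τ t)|) := by
    refine ⟨L * (T₀ / N) + L * (T₀ / N), ?_⟩
    rintro _ ⟨t, rfl⟩
    exact (abs_sub _ _).trans (add_le_add (W₁.abs_ripple_le hN t) (W₂.abs_ripple_le hN (τ t)))
  refine le_half_of_forall_bound_improves hbdd (fun S hS t => ?_) t
  have hdrive (t : ℝ) : |arrayDrive N I T₁ v₁ t - arrayDrive N I T₂ v₂ (τ t)| ≤
      |2 * π / T₂ - 2 * π / T₁| + S := by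
    rw [arrayDrive_sub_arrayDrive]
    exact (abs_sub _ _).trans (add_le_add_right (hS t) _)
  have hthird : contractionConst β a M L T₀ / N ≤ 1 / 3 := by
    rw [div_le_iff₀ hN']
    linarith
  calc _ ≤ _ := hτ.abs_ripple_sub_le_of_drive W₁ W₂ hN hβ ha hdrive t
    _ ≤ 1 / 3 * (|2 * π / T₂ - 2 * π / T₁| + S) :=
        mul_le_mul_of_nonneg_right hthird ((abs_nonneg _).trans (hdrive 0))
    _ = (|2 * π / T₂ - 2 * π / T₁| + S) / 3 := by ring

end IsPhaseMatch

namespace IsBoundedArrayWave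

include hNC

theorem period_le_period : T₁ ≤ T₂ := by
  obtain ⟨τ, hτ⟩ := exists_isPhaseMatch ha W₁.hasDerivAt_phase W₂.hasDerivAt_phase W₁.running
    W₂.running fun t => (W₂.speed_mem t).1
  by_contra! hlt
  have hmean : 0 < 2 * π / T₂ - 2 * π / T₁ :=
    sub_pos.2 (div_lt_div_of_pos_left two_pi_pos W₂.period_pos hlt)
  refine hlt.not_gt (hτ.period_lt_of_drive_lt W₁ W₂ hβ ha fun t => sub_pos.1 ?_)
  have hripple := hτ.abs_ripple_sub_le_half W₁ W₂ hN hβ ha hNC t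
  rw [abs_of_pos hmean] at hripple
  rw [arrayDrive_sub_arrayDrive]
  linarith [le_of_abs_le hripple]

theorem exists_eq_shift (hT : T₁ = T₂) : ∃ s, ∀ t, ψ₁ t = ψ₂ (t - s) := by
  subst hT
  obtain ⟨τ, hτ⟩ := exists_isPhaseMatch ha W₁.hasDerivAt_phase W₂.hasDerivAt_phase W₁.running
    W₂.running fun t => (W₂.speed_mem t).1
  have hdrive (t : ℝ) : |arrayDrive N I T₁ v₁ t - arrayDrive N I T₁ v₂ (τ t)| ≤ 0 := by
    rw [arrayDrive_sub_arrayDrive, sub_self, zero_sub, abs_neg]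
    simpa using hτ.abs_ripple_sub_le_half W₁ W₂ hN hβ ha hNC t
  have hshift (t : ℝ) : τ t = t + τ 0 := by
    have hdrift := hτ.abs_sub_affine_le W₁ W₂ hβ ha hdrive t
    rw [mul_zero, abs_nonpos_iff, div_self W₁.period_pos.ne', one_mul] at hdrift
    exact sub_eq_zero.1 hdrift
  exact ⟨-τ 0, fun t => by rw [sub_neg_eq_add, ← hshift, hτ.phase_eq]⟩

end IsBoundedArrayWave

end Uniqueness

theorem exists_forall_isBoundedArrayWave {β I : ℝ} (hβ : 0 < β) (hI : 1 < I) :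
    ∃ a > 0, ∃ N₁ : ℕ, ∀ N > N₁, ∀ ψ T, IsDRWRes N β I ψ T →
      IsBoundedArrayWave N β I a (I + 1) (3 / β) (4 * π / (I - 1)) ψ (deriv ψ) T := by
  have hT₀ : 0 < 4 * π / (I - 1) := div_pos (by positivity) (sub_pos.2 hI)
  obtain ⟨a, ha, ε, hε, hfloor⟩ := exists_forall_le_speed hβ (by linarith : 0 < I + 1)
    (by positivity : 0 < 3 / β) hT₀
  obtain ⟨N₁, hN₁⟩ := exists_nat_gt (3 / β * (4 * π / (I - 1)) / ε)
  refine ⟨a, ha, N₁, fun N hN ψ T hψ => ?_⟩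
  have hN₀ : N ≠ 0 := Nat.ne_zero_of_lt hN
  have W := (hψ.isPendulumWave hN₀ hβ.ne').isBoundedArrayWave hN₀ hβ hI
  refine ⟨W.1, fun t => ⟨hfloor W (J₀ := I - 2 * π / T) (fun t => ?_) t, (W.speed_mem t).2⟩,
    W.abs_accel_le, W.period_le⟩
  have hN' : (N₁ : ℝ) < N := Nat.cast_lt.2 hN
  calc |arrayDrive N I T (deriv ψ) t - (I - 2 * π / T)| = |ripple N T (deriv ψ) t| := by
        rw [arrayDrive, ripple, sub_sub_sub_cancel_left, abs_sub_comm]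
    _ ≤ 3 / β * (4 * π / (I - 1) / N) := W.abs_ripple_le hN₀ t
    _ ≤ ε := by
        rw [← mul_div_assoc, div_le_comm₀ (by positivity) hε]
        exact (hN₁.trans hN').le

/-- **(Aronson–Huang, uniqueness of DRWs.)** For `β > 0` and `I > 1` there exists `N₀`
such that for every `N > N₀` the discrete rotating wave solution of the resistively
loaded `N`-junction array is unique up to permutation of the junction indices and time
shift: any two DRW waveforms `ψ, ψ̃` with periods `T, T̃` satisfy `T = T̃` and
`ψ̃(t) = ψ(t − s)` for some `s`. -/
theorem aronson_huang_drw_unique (β I : ℝ) (hβ : 0 < β) (hI : 1 < I) :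
    ∃ N₀ : ℕ, ∀ N : ℕ, N₀ < N →
      ∀ (ψ ψ' : ℝ → ℝ) (T T' : ℝ),
        IsDRWRes N β I ψ T → IsDRWRes N β I ψ' T' →
        T = T' ∧ ∃ s : ℝ, ∀ t : ℝ, ψ' t = ψ (t - s) := by
  obtain ⟨a, ha, N₁, hwave⟩ := exists_forall_isBoundedArrayWave hβ hI
  obtain ⟨N₂, hN₂⟩ :=
    exists_nat_ge (3 * contractionConst β a (I + 1) (3 / β) (4 * π / (I - 1)))
  refine ⟨max N₁ N₂, fun N hN ψ ψ' T T' hψ hψ' => ?_⟩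
  have hN₀ : N ≠ 0 := Nat.ne_zero_of_lt hN
  have hNC : 3 * contractionConst β a (I + 1) (3 / β) (4 * π / (I - 1)) ≤ N :=
    hN₂.trans (Nat.cast_le.2 (max_lt_iff.1 hN).2.le)
  have W := hwave N (max_lt_iff.1 hN).1 ψ T hψ
  have W' := hwave N (max_lt_iff.1 hN).1 ψ' T' hψ'
  have hT : T = T' := le_antisymm (W.period_le_period W' hN₀ hβ ha hNC)
    (W'.period_le_period W hN₀ hβ ha hNC)
  exact ⟨hT, W'.exists_eq_shift W hN₀ hβ ha hNC hT.symm⟩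
end
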